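/- arXiv:2012.13515 — 3 statements merged into one kernel-verified Lean document; each statement's English description precedes it below -/
import Mathlib

section
/- Let E ⊆ ℝ² be compact, ε > 0, and x ∈ ∂E_ε. Then x is smooth (i.e. x ∈ Unp(E) and ∂E_ε ∩ B_r(x) ⊆ Unp(E) for some r > 0) if and only if there exist δ > 0 and an injective continuously differentiable map γ : [0,1] → ℝ² with nowhere-vanishing derivative such that γ([0,1]) = ∂E_ε ∩ closed-ball(x, δ). -/
open Metric Set Filter Topology RealInnerProductSpace

noncomputable section

/-- The Euclidean plane. -/
abbrev Plane := EuclideanSpace ℝ (Fin 2)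

/-- The closed ε-neighbourhood of a set `E ⊆ ℝ²`: the closure of the union of open
ε-balls centred at points of `E`. -/
def eNbhd (E : Set Plane) (ε : ℝ) : Set Plane :=
  closure (⋃ y ∈ E, ball y ε)

/-- The set of contributors of a boundary point `x ∈ ∂E_ε`: points `y ∈ ∂E` with
`‖y - x‖ = ε`. -/
def contributors (E : Set Plane) (ε : ℝ) (x : Plane) : Set Plane :=
  {y ∈ frontier E | ‖y - x‖ = ε}

/-- The set of outward directions from `E_ε` at `x`. -/
def outwardDirs (E : Set Plane) (ε : ℝ) (x : Plane) : Set Plane :=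
  {ξ | ‖ξ‖ = 1 ∧ ∃ u : ℕ → Plane, (∀ n, u n ∉ eNbhd E ε) ∧
    Tendsto u atTop (nhds x) ∧
    Tendsto (fun n => (‖u n - x‖)⁻¹ • (u n - x)) atTop (nhds ξ)}

/-- The set of extremal outward directions at `x`: outward directions perpendicular to
`y - x` for some contributor `y`. -/
def extOutward (E : Set Plane) (ε : ℝ) (x : Plane) : Set Plane :=
  {ξ ∈ outwardDirs E ε x | ∃ y ∈ contributors E ε x, ⟪y - x, ξ⟫ = 0}

/-- The set of extremal contributors at `x`: contributors perpendicular to some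
outward direction. -/
def extContrib (E : Set Plane) (ε : ℝ) (x : Plane) : Set Plane :=
  {y ∈ contributors E ε x | ∃ ξ ∈ outwardDirs E ε x, ⟪y - x, ξ⟫ = 0}

/-- The set of extremal pairs at `x`. -/
def extPairs (E : Set Plane) (ε : ℝ) (x : Plane) : Set (Plane × Plane) :=
  {p | p.1 ∈ outwardDirs E ε x ∧ p.2 ∈ contributors E ε x ∧ ⟪p.2 - x, p.1⟫ = 0}

/-- The set `Unp(E)` of boundary points of `E_ε` with a unique contributor. -/
def unp (E : Set Plane) (ε : ℝ) : Set Plane :=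
  {x ∈ frontier (eNbhd E ε) | ∃ y, contributors E ε x = {y}}

/-- A boundary point `x ∈ ∂E_ε` is smooth if `x ∈ Unp(E)` and a whole neighbourhood of
`x` on the boundary consists of points of `Unp(E)`. -/
def IsSmoothPt (E : Set Plane) (ε : ℝ) (x : Plane) : Prop :=
  x ∈ unp E ε ∧ ∃ r > 0, frontier (eNbhd E ε) ∩ ball x r ⊆ unp E ε

/-- A singularity: a non-smooth boundary point of `E_ε`. -/
def IsSingularity (E : Set Plane) (ε : ℝ) (x : Plane) : Prop :=
  x ∈ frontier (eNbhd E ε) ∧ ¬ IsSmoothPt E ε x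

/-- The open half-ball of radius `r` at `x` in direction `v`. -/
def halfBall (x v : Plane) (r : ℝ) : Set Plane :=
  {z ∈ ball x r | 0 < ⟪z - x, v⟫}

/-- `V` is a connected component of the complement of `E_ε`. -/
def IsCompOfCompl (E : Set Plane) (ε : ℝ) (V : Set Plane) : Prop :=
  ∃ z, z ∉ eNbhd E ε ∧ V = connectedComponentIn (eNbhd E ε)ᶜ z

/-- The closed geodesic arc-segment between `v, w ∈ S¹`. -/
def arcSeg (v w : Plane) : Set Plane :=
  {u | ‖u‖ = 1 ∧ ∃ a b : ℝ, 0 ≤ a ∧ 0 ≤ b ∧ u = a • v + b • w}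

/-- The open geodesic arc-segment between `v, w ∈ S¹`. -/
def openArc (v w : Plane) : Set Plane :=
  arcSeg v w \ {v, w}

/-- A chain sequence for `x`: a sequence of singularities converging to `x` whose
extremal contributors become increasingly opposed. -/
def IsChainSeq (E : Set Plane) (ε : ℝ) (x : Plane) (u : ℕ → Plane) : Prop :=
  (∀ n, IsSingularity E ε (u n)) ∧ (∀ n, u n ≠ x) ∧ Tendsto u atTop (nhds x) ∧
  ∃ y1 y2 : ℕ → Plane, (∀ n, extContrib E ε (u n) = {y1 n, y2 n}) ∧
    Tendsto (fun n => ⟪ε⁻¹ • (y1 n - u n), ε⁻¹ • (y2 n - u n)⟫) atTop (nhds (-1))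

/-- Type S1: wedge. -/
def IsWedge (E : Set Plane) (ε : ℝ) (x : Plane) : Prop :=
  IsSingularity E ε x ∧
  ∃ ξ₁ ξ₂, extOutward E ε x = {ξ₁, ξ₂} ∧ ξ₁ ≠ ξ₂ ∧ ξ₁ ≠ -ξ₂

/-- Type S2: one-sided sharp singularity. -/
def IsSharp (E : Set Plane) (ε : ℝ) (x : Plane) : Prop :=
  IsSingularity E ε x ∧ (∃ ξ, extOutward E ε x = {ξ}) ∧
  ∃ δ > 0, IsConnected (ball x δ ∩ (eNbhd E ε)ᶜ)

/-- Type S3: sharp-sharp singularity. -/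
def IsSharpSharp (E : Set Plane) (ε : ℝ) (x : Plane) : Prop :=
  IsSingularity E ε x ∧ ∃ ξ, extOutward E ε x = {ξ, -ξ} ∧
    ∀ η ∈ ({ξ, -ξ} : Set Plane), ∃ δ > 0, IsConnected (halfBall x η δ ∩ (eNbhd E ε)ᶜ)

/-- Type S4: one-sided shallow singularity. -/
def IsShallow (E : Set Plane) (ε : ℝ) (x : Plane) : Prop :=
  IsSingularity E ε x ∧ x ∈ unp E ε ∧
  ∃ ξ₁ ξ₂, extOutward E ε x = {ξ₁, ξ₂} ∧
    (∃ δ > 0, halfBall x ξ₁ δ ∩ frontier (eNbhd E ε) ⊆ unp E ε) ∧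
    (∀ δ > 0, ¬ (halfBall x ξ₂ δ ∩ frontier (eNbhd E ε) ⊆ unp E ε))

/-- Type S5: shallow-shallow singularity. -/
def IsShallowShallow (E : Set Plane) (ε : ℝ) (x : Plane) : Prop :=
  IsSingularity E ε x ∧ x ∈ unp E ε ∧
  ∃ ξ₁ ξ₂, extOutward E ε x = {ξ₁, ξ₂} ∧
    ∀ η ∈ ({ξ₁, ξ₂} : Set Plane), ∀ δ > 0,
      ¬ (halfBall x η δ ∩ frontier (eNbhd E ε) ⊆ unp E ε)

/-- Type S6: one-sided chain singularity. -/
def IsChainSing (E : Set Plane) (ε : ℝ) (x : Plane) : Prop :=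
  IsSingularity E ε x ∧ (∃ ξ, extOutward E ε x = {ξ}) ∧
  ∃ u, IsChainSeq E ε x u

/-- Type S7: chain-chain singularity. -/
def IsChainChain (E : Set Plane) (ε : ℝ) (x : Plane) : Prop :=
  IsSingularity E ε x ∧ ∃ ξ, extOutward E ε x = {ξ, -ξ} ∧
    ∀ η ∈ ({ξ, -ξ} : Set Plane), ∃ δ > 0, ∃ u,
      IsChainSeq E ε x u ∧ ∀ n, u n ∈ halfBall x η δ

/-- Type S8: sharp-chain singularity. -/
def IsSharpChain (E : Set Plane) (ε : ℝ) (x : Plane) : Prop :=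
  IsSingularity E ε x ∧ ∃ ξ, extOutward E ε x = {ξ, -ξ} ∧
    (∃ δ > 0, IsConnected (halfBall x ξ δ ∩ (eNbhd E ε)ᶜ)) ∧
    (∃ δ > 0, ∃ u, IsChainSeq E ε x u ∧ ∀ n, u n ∈ halfBall x (-ξ) δ)

/-- rotation by a right angle -/
def rot (v : Plane) : Plane := !₂[-v 1, v 0]

lemma inner_plane (a b : Plane) : ⟪a, b⟫ = a 0 * b 0 + a 1 * b 1 := by
  simp [PiLp.inner_apply, Fin.sum_univ_two]
  ring

lemma inner_rot (v : Plane) : ⟪v, rot v⟫ = 0 := by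
  rw [inner_plane]; simp [rot]; ring

lemma norm_rot (v : Plane) : ‖rot v‖ = ‖v‖ := by
  simp [EuclideanSpace.norm_eq, rot, Fin.sum_univ_two]
  congr 1; ring

lemma frame_decomp (v w : Plane) : (‖v‖ ^ 2) • w = ⟪w, v⟫ • v + ⟪w, rot v⟫ • rot v := by
  rw [← real_inner_self_eq_norm_sq]
  simp only [inner_plane]
  ext i
  fin_cases i <;> simp [rot] <;> ring

lemma frame_norm (v w : Plane) : ‖v‖ ^ 2 * ‖w‖ ^ 2 = ⟪w, v⟫ ^ 2 + ⟪w, rot v⟫ ^ 2 := by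
  rw [← real_inner_self_eq_norm_sq, ← real_inner_self_eq_norm_sq]
  simp only [inner_plane]
  simp [rot]; ring

/-- equivalence from injectivity in equal dimension -/
lemma exists_equiv {V W : Type*} [NormedAddCommGroup V] [NormedSpace ℝ V]
    [NormedAddCommGroup W] [NormedSpace ℝ W] [FiniteDimensional ℝ V] [FiniteDimensional ℝ W]
    (h : Module.finrank ℝ V = Module.finrank ℝ W) (f : V →L[ℝ] W)
    (hf : ∀ v, f v = 0 → v = 0) : ∃ e : V ≃L[ℝ] W, (e : V →L[ℝ] W) = f := by
  have hinj : Function.Injective (f : V →ₗ[ℝ] W) := by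
    rw [injective_iff_map_eq_zero]; exact hf
  refine ⟨(LinearMap.linearEquivOfInjective (f : V →ₗ[ℝ] W) hinj h).toContinuousLinearEquiv, ?_⟩
  ext v
  simp

lemma finrank_prod_plane : Module.finrank ℝ (ℝ × ℝ) = Module.finrank ℝ Plane := by
  simp

/-! distance facts -/
section dist
variable {E : Set Plane} {ε : ℝ}

lemma eNbhd_eq (hε : 0 < ε) : eNbhd E ε = cthickening ε E := by
  rw [eNbhd, ← thickening_eq_biUnion_ball, closure_thickening hε]

lemma nonempty_of_frontier {x : Plane} (hx : x ∈ frontier (eNbhd E ε)) : E.Nonempty := by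
  by_contra h
  rw [not_nonempty_iff_eq_empty] at h
  subst h
  simp [eNbhd] at hx

lemma mem_eNbhd (hε : 0 < ε) (hne : E.Nonempty) (z : Plane) :
    z ∈ eNbhd E ε ↔ infDist z E ≤ ε := by
  rw [eNbhd_eq hε, mem_cthickening_iff]
  rw [infDist, ENNReal.le_ofReal_iff_toReal_le (infEDist_ne_top hne) hε.le]

lemma isClosed_eNbhd : IsClosed (eNbhd E ε) := isClosed_closure

lemma infDist_of_frontier (hε : 0 < ε) (hne : E.Nonempty) {z : Plane}
    (hz : z ∈ frontier (eNbhd E ε)) : infDist z E = ε := by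
  have h1 := (mem_eNbhd hε hne z).1 (isClosed_eNbhd.frontier_subset hz)
  refine le_antisymm h1 ?_
  by_contra h
  push Not at h
  have : z ∈ interior (eNbhd E ε) := by
    rw [mem_interior_iff_mem_nhds]
    filter_upwards [(continuous_infDist_pt E).continuousAt.eventually_lt_const h] with p hp
    exact (mem_eNbhd hε hne p).2 hp.le
  exact hz.2 this

lemma mem_contributors_iff (hE : IsCompact E) (hε : 0 < ε) {z : Plane}
    (hz : infDist z E = ε) (y : Plane) : y ∈ contributors E ε z ↔ y ∈ E ∧ dist z y = ε := by
  have hd : dist z y = ‖y - z‖ := by rw [dist_comm, dist_eq_norm]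
  rw [hd]
  constructor
  · rintro ⟨h1, h2⟩
    exact ⟨hE.isClosed.frontier_subset h1, h2⟩
  · rintro ⟨h1, h2⟩
    refine ⟨⟨subset_closure h1, fun hi => ?_⟩, h2⟩
    have hc : ContinuousAt (fun t : ℝ => y + t • (z - y)) 0 := by fun_prop
    have hm : ∀ᶠ t : ℝ in 𝓝 0, y + t • (z - y) ∈ E := by
      apply hc.eventually
      have : y + (0 : ℝ) • (z - y) = y := by simp
      show ∀ᶠ w in 𝓝 (y + (0 : ℝ) • (z - y)), w ∈ E
      rw [this]
      exact mem_interior_iff_mem_nhds.1 hi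
    have hm2 : ∀ᶠ t : ℝ in 𝓝[>] 0, y + t • (z - y) ∈ E ∧ t < 1 :=
      (hm.filter_mono nhdsWithin_le_nhds).and
        ((eventually_lt_nhds one_pos).filter_mono nhdsWithin_le_nhds)
    obtain ⟨t, ⟨ht, ht1⟩, ht0⟩ := (hm2.and self_mem_nhdsWithin).exists
    have ht0 : 0 < t := ht0
    have h3 := infDist_le_dist_of_mem (x := z) ht
    have h4 : dist z (y + t • (z - y)) = (1 - t) * ε := by
      rw [dist_eq_norm, ← h2, norm_sub_rev y z, ← Real.norm_of_nonneg (sub_nonneg.2 ht1.le),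
        ← norm_smul]
      congr 1
      module
    rw [hz, h4] at h3
    nlinarith

lemma exists_nearest (hE : IsCompact E) (hne : E.Nonempty) (z : Plane) :
    ∃ q ∈ E, dist z q = infDist z E := by
  obtain ⟨q, h, h'⟩ := hE.exists_infDist_eq_dist hne z
  exact ⟨q, h, h'.symm⟩

/-- continuity of nearest points at a point with a unique contributor -/
lemma nearest_close (hE : IsCompact E) {z y : Plane}
    (hz : infDist z E = ε) (hu : ∀ q ∈ E, dist z q = ε → q = y) {η : ℝ} (hη : 0 < η) :
    ∃ ρ > 0, ∀ p ∈ ball z ρ, ∀ q ∈ E, dist p q = infDist p E → dist q y < η := by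
  set K := E \ ball y η with hK
  have hKc : IsCompact K := hE.diff isOpen_ball
  rcases K.eq_empty_or_nonempty with h | h
  · refine ⟨1, one_pos, fun p _ q hq _ => ?_⟩
    by_contra hc
    have : q ∈ K := ⟨hq, by simpa using hc⟩
    rw [h] at this; exact this
  · obtain ⟨k, hk, hkd⟩ := hKc.exists_infDist_eq_dist h z
    have h1 : ε < infDist z K := by
      rw [hkd]
      have h2 : ε ≤ dist z k := hz ▸ infDist_le_dist_of_mem hk.1
      refine lt_of_le_of_ne h2 fun h3 => ?_
      have := hu k hk.1 h3.symm
      apply hk.2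
      rw [this]; exact mem_ball_self hη
    refine ⟨(infDist z K - ε) / 2, by linarith, fun p hp q hq hpq => ?_⟩
    by_contra hc
    have hqK : q ∈ K := ⟨hq, by simpa using hc⟩
    have h2 : infDist z K ≤ dist z q := infDist_le_dist_of_mem hqK
    have h3 : dist z q ≤ dist p z + dist p q := by
      rw [dist_comm p z]; exact dist_triangle z p q
    have h4 : infDist p E ≤ infDist z E + dist p z := infDist_le_infDist_add_dist
    rw [mem_ball] at hp
    linarith

/-- the squared distance is strictly differentiable at points with unique contributor -/
lemma strict_deriv (hE : IsCompact E) (hne : E.Nonempty) {z y : Plane}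
    (hz : infDist z E = ε) (hu : ∀ q ∈ E, dist z q = ε → q = y) :
    HasStrictFDerivAt (fun p => infDist p E ^ 2) (2 • innerSL ℝ (z - y)) z := by
  rw [hasStrictFDerivAt_iff_isLittleO, Asymptotics.isLittleO_iff]
  intro c hc
  obtain ⟨ρ, hρ, H⟩ := nearest_close hE hz hu (η := c / 6) (by positivity)
  have key : ∀ p ∈ ball z (min ρ (c / 6)), ∀ p' ∈ ball z (min ρ (c / 6)),
      infDist p E ^ 2 - infDist p' E ^ 2 - 2 * ⟪z - y, p - p'⟫ ≤ c * ‖p - p'‖ := by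
    intro p hp p' hp'
    obtain ⟨q, hq, hqd⟩ := exists_nearest hE hne p'
    have h1 := H p' (ball_subset_ball (min_le_left _ _) hp') q hq hqd
    have h2 : infDist p E ≤ dist p q := infDist_le_dist_of_mem hq
    have h3 : infDist p E ^ 2 ≤ dist p q ^ 2 := by
      gcongr
      exact infDist_nonneg
    rw [← hqd]
    have hpz : ‖p - z‖ < c / 6 := by
      rw [← dist_eq_norm]; exact lt_of_lt_of_le hp (min_le_right _ _)
    have hpz' : ‖p' - z‖ < c / 6 := by
      rw [← dist_eq_norm]; exact lt_of_lt_of_le hp' (min_le_right _ _)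
    have h4 : dist p q ^ 2 = dist p' q ^ 2 + 2 * ⟪p' - q, p - p'⟫ + ‖p - p'‖ ^ 2 := by
      rw [dist_eq_norm, dist_eq_norm, ← norm_add_sq_real]
      congr 2
      abel
    have h5 : ⟪p' - q, p - p'⟫ - ⟪z - y, p - p'⟫ ≤ (c / 6 + c / 6) * ‖p - p'‖ := by
      rw [← inner_sub_left]
      refine (real_inner_le_norm _ _).trans ?_
      gcongr
      have : p' - q - (z - y) = (p' - z) - (q - y) := by abel
      rw [this]
      refine (norm_sub_le _ _).trans ?_
      rw [dist_eq_norm] at h1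
      linarith
    have h6 : ‖p - p'‖ ≤ c / 3 := by
      have : p - p' = (p - z) - (p' - z) := by abel
      rw [this]
      refine (norm_sub_le _ _).trans ?_
      linarith
    nlinarith [norm_nonneg (p - p')]
  have hb : ball z (min ρ (c / 6)) ∈ 𝓝 z := ball_mem_nhds _ (by positivity)
  rw [nhds_prod_eq]
  filter_upwards [prod_mem_prod hb hb] with pp hpp
  obtain ⟨p, p'⟩ := pp
  have k1 := key p hpp.1 p' hpp.2
  have k2 := key p' hpp.2 p hpp.1
  rw [norm_sub_rev p' p, ← neg_sub p p', inner_neg_right] at k2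
  simp only [Real.norm_eq_abs]
  rw [abs_le]
  have e : (2 • innerSL ℝ (z - y)) (p - p') = 2 * ⟪z - y, p - p'⟫ := by
    rw [two_smul, two_mul]; rfl
  rw [e]
  constructor <;> linarith

end dist

/-- strict derivatives everywhere give a `C¹` curve -/
lemma continuousOn_of_strict {γ g : ℝ → Plane} {s : Set ℝ} (hs : IsOpen s)
    (h : ∀ t ∈ s, HasStrictDerivAt γ (g t) t) : ContinuousOn g s := by
  intro t ht
  refine ContinuousAt.continuousWithinAt ?_
  rw [Metric.continuousAt_iff']
  intro c hc
  have h1 := (hasStrictFDerivAt_iff_isLittleO.1 (h t ht).hasStrictFDerivAt).def (half_pos hc)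
  rw [nhds_prod_eq, Filter.eventually_prod_self_iff'] at h1
  obtain ⟨u, hu, h2⟩ := h1
  obtain ⟨v, hvu, hv, htv⟩ := _root_.mem_nhds_iff.1 hu
  filter_upwards [hv.mem_nhds htv, hs.mem_nhds ht] with r hr hrs
  have h3 : HasDerivAt (fun a => γ a - a • g t) (g r - g t) r := by
    have := (h r hrs).hasDerivAt.sub ((hasDerivAt_id r).smul_const (g t))
    rw [one_smul] at this
    exact this
  have h4 : ‖g r - g t‖ ≤ c / 2 := by
    have := h3.hasFDerivAt.le_of_lip' (half_pos hc).le (by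
      filter_upwards [hv.mem_nhds hr] with a ha
      have := h2 a (hvu ha) r (hvu hr)
      simp at this
      have e : γ a - a • g t - (γ r - r • g t) = γ a - γ r - (a - r) • g t := by module
      rw [e]; simpa using this)
    simpa using this
  rw [dist_eq_norm]; linarith

/-! forward direction -/

lemma reparam {γ₀ : ℝ → Plane} {S : Set ℝ} (hS : IsOpen S) {g : ℝ → Plane}
    (hg : ∀ s ∈ S, HasStrictDerivAt γ₀ (g s) s) (hg0 : ∀ s ∈ S, g s ≠ 0)
    (hinj : InjOn γ₀ S) {a b : ℝ} (hab : a < b) (hI : Icc a b ⊆ S) :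
    ∃ γ : ℝ → Plane, InjOn γ (Icc 0 1) ∧ ContDiffOn ℝ 1 γ (Icc 0 1) ∧
        (∀ t ∈ Icc (0 : ℝ) 1, derivWithin γ (Icc 0 1) t ≠ 0) ∧
        γ '' Icc 0 1 = γ₀ '' Icc a b := by
  have hba : 0 < b - a := sub_pos.2 hab
  set φ : ℝ → ℝ := fun t => a + t * (b - a) with hφ
  have hmaps : MapsTo φ (Icc 0 1) (Icc a b) := by
    intro t ht
    constructor
    · have := mul_nonneg ht.1 hba.le
      simp only [hφ]; linarith
    · have := mul_le_mul_of_nonneg_right ht.2 hba.le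
      simp only [hφ]; linarith
  have hcont : ContinuousOn g S := continuousOn_of_strict hS hg
  have hd : ∀ t ∈ Icc (0 : ℝ) 1, HasDerivAt (γ₀ ∘ φ) ((b - a) • g (φ t)) t := by
    intro t ht
    have h1 := (hg (φ t) (hI (hmaps ht))).hasDerivAt
    have h2 : HasDerivAt φ (b - a) t := by
      have := ((hasDerivAt_id t).mul_const (b - a)).const_add a
      rw [one_mul] at this
      exact this
    exact h1.scomp t h2
  have hu : UniqueDiffOn ℝ (Icc (0 : ℝ) 1) := uniqueDiffOn_Icc one_pos
  have hdw : ∀ t ∈ Icc (0 : ℝ) 1, derivWithin (γ₀ ∘ φ) (Icc 0 1) t = (b - a) • g (φ t) :=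
    fun t ht => (hd t ht).hasDerivWithinAt.derivWithin (hu t ht)
  refine ⟨γ₀ ∘ φ, ?_, ?_, ?_, ?_⟩
  · intro t ht t' ht' h
    have := hinj (hI (hmaps ht)) (hI (hmaps ht')) h
    simp only [hφ] at this
    have h2 : t * (b - a) = t' * (b - a) := by linarith
    exact mul_right_cancel₀ hba.ne' h2
  · rw [contDiffOn_one_iff_derivWithin hu]
    refine ⟨fun t ht => (hd t ht).differentiableAt.differentiableWithinAt, ?_⟩
    refine ContinuousOn.congr ?_ hdw
    have h1 : ContinuousOn (fun t => g (φ t)) (Icc 0 1) :=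
      hcont.comp (by fun_prop) (fun t ht => hI (hmaps ht))
    exact ContinuousOn.smul (f := fun _ : ℝ => b - a) continuousOn_const h1
  · intro t ht
    rw [hdw t ht]
    exact smul_ne_zero hba.ne' (hg0 _ (hI (hmaps ht)))
  · rw [image_comp]
    congr 1
    apply Subset.antisymm (image_subset_iff.2 hmaps)
    intro s hs
    refine ⟨(s - a) / (b - a), ⟨div_nonneg (by linarith [hs.1]) hba.le, ?_⟩, ?_⟩
    · rw [div_le_one hba]; linarith [hs.2]
    · simp only [hφ]; field_simp; ring

section fwd
variable {E : Set Plane} {ε : ℝ}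

lemma frontier_of_eq (hE : IsCompact E) (hε : 0 < ε) (hne : E.Nonempty) {x y : Plane}
    (hDx : infDist x E = ε) (hxy : dist x y = ε) (hu : ∀ q ∈ E, dist x q = ε → q = y) :
    ∃ U : Set Plane, IsOpen U ∧ x ∈ U ∧
      ∀ z ∈ U, infDist z E = ε → z ∈ frontier (eNbhd E ε) := by
  have h1 := (hasStrictFDerivAt_iff_isLittleO.1 (strict_deriv hE hne hDx hu)).def hε
  rw [nhds_prod_eq, Filter.eventually_prod_self_iff'] at h1
  obtain ⟨u, hu, h2⟩ := h1
  obtain ⟨U, hUu, hU, hxU⟩ := _root_.mem_nhds_iff.1 hu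
  refine ⟨U, hU, hxU, fun z hz hDz => ?_⟩
  have hv : ‖x - y‖ = ε := by rw [← dist_eq_norm, hxy]
  refine ⟨subset_closure ((mem_eNbhd hε hne z).2 hDz.le), ?_⟩
  rw [← mem_compl_iff, ← closure_compl]
  have hc : ContinuousAt (fun t : ℝ => z + t • (x - y)) 0 := by fun_prop
  have hc' : Tendsto (fun t : ℝ => z + t • (x - y)) (𝓝[>] 0) (𝓝 z) := by
    have : Tendsto (fun t : ℝ => z + t • (x - y)) (𝓝 0) (𝓝 (z + (0 : ℝ) • (x - y))) := hc
    simp only [zero_smul, add_zero] at this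
    exact this.mono_left nhdsWithin_le_nhds
  refine mem_closure_of_tendsto hc' ?_
  filter_upwards [hc'.eventually (hU.mem_nhds hz), self_mem_nhdsWithin] with t ht ht0
  have ht0 : 0 < t := ht0
  rw [mem_compl_iff, mem_eNbhd hε hne, not_le]
  have h3 := h2 _ (hUu ht) _ (hUu hz)
  have e : ∀ w, (2 • innerSL ℝ (x - y)) w = 2 * ⟪x - y, w⟫ := by
    intro w; rw [two_smul, two_mul]; rfl
  rw [e, add_sub_cancel_left, inner_smul_right, real_inner_self_eq_norm_sq, norm_smul, hv, hDz,
    Real.norm_eq_abs, Real.norm_eq_abs, abs_of_pos ht0, abs_le] at h3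
  have h4 := h3.1
  have h5 : ε ^ 2 < infDist (z + t • (x - y)) E ^ 2 := by nlinarith [mul_pos ht0 (pow_pos hε 2)]
  exact lt_of_pow_lt_pow_left₀ 2 infDist_nonneg h5

lemma local_equiv (hE : IsCompact E) (hne : E.Nonempty) {x v : Plane}
    (hv : v ≠ 0) {z y : Plane} (hDz : infDist z E = ε)
    (hu : ∀ q ∈ E, dist z q = ε → q = y) (hpos : 0 < ⟪z - y, v⟫) :
    ∃ e : Plane ≃L[ℝ] ℝ × ℝ, (∀ w, e w = (⟪rot v, w⟫, 2 * ⟪z - y, w⟫)) ∧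
      HasStrictFDerivAt (fun p => (⟪rot v, p - x⟫, infDist p E ^ 2)) (e : Plane →L[ℝ] ℝ × ℝ) z := by
  have h1 := strict_deriv hE hne hDz hu
  have h2 : HasStrictFDerivAt (fun p => ⟪rot v, p - x⟫) (innerSL ℝ (rot v)) z := by
    have := (innerSL ℝ (rot v)).hasStrictFDerivAt.comp z ((hasStrictFDerivAt_id z).sub_const x)
    simpa [Function.comp_def] using this
  have h3 := h2.prodMk h1
  have e2 : ∀ w, (2 • innerSL ℝ (z - y)) w = 2 * ⟪z - y, w⟫ := by
    intro w; rw [two_smul, two_mul]; rfl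
  obtain ⟨e, he⟩ := exists_equiv finrank_prod_plane.symm
    ((innerSL ℝ (rot v)).prod (2 • innerSL ℝ (z - y))) (by
      intro w hw
      have hw1 : ⟪rot v, w⟫ = 0 := congrArg Prod.fst hw
      have hw2 : (2 • innerSL ℝ (z - y)) w = 0 := congrArg Prod.snd hw
      rw [e2] at hw2
      have hd := frame_decomp v w
      rw [real_inner_comm w (rot v)] at hw1
      rw [hw1, zero_smul, add_zero] at hd
      have h4 : ‖v‖ ^ 2 * ⟪z - y, w⟫ = ⟪w, v⟫ * ⟪z - y, v⟫ := by
        rw [← inner_smul_right, hd, inner_smul_right]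
      have h5 : ⟪z - y, w⟫ = 0 := by linarith
      rw [h5, mul_zero] at h4
      have h6 : ⟪w, v⟫ = 0 := by
        rcases mul_eq_zero.1 h4.symm with h | h
        · exact h
        · exact absurd h hpos.ne'
      rw [h6, zero_smul] at hd
      rcases smul_eq_zero.1 hd with h | h
      · exact absurd h (by positivity)
      · exact h)
  refine ⟨e, fun w => ?_, he ▸ h3⟩
  have : e w = (e : Plane →L[ℝ] ℝ × ℝ) w := rfl
  rw [this, he, ← e2]; rfl

end fwd

section fwd2
variable {E : Set Plane} {ε : ℝ}

lemma unp_spec (hE : IsCompact E) (hε : 0 < ε) (hne : E.Nonempty) {z : Plane}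
    (hz : z ∈ unp E ε) : ∃ y, infDist z E = ε ∧ y ∈ E ∧ dist z y = ε ∧
      ∀ q ∈ E, dist z q = ε → q = y := by
  obtain ⟨hf, y, hy⟩ := hz
  have hD := infDist_of_frontier hε hne hf
  have h1 : y ∈ contributors E ε z := by rw [hy]; rfl
  have h2 := (mem_contributors_iff hE hε hD y).1 h1
  refine ⟨y, hD, h2.1, h2.2, fun q hq hd => ?_⟩
  have h3 := (mem_contributors_iff hE hε hD q).2 ⟨hq, hd⟩
  rw [hy] at h3
  exact h3

/-- the local parametrisation -/
lemma local_param (hE : IsCompact E) (hε : 0 < ε) (hne : E.Nonempty) {x y : Plane}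
    (hDx : infDist x E = ε) (hxy : dist x y = ε) (hu : ∀ q ∈ E, dist x q = ε → q = y)
    {r : ℝ} (hr : 0 < r) (hsub : frontier (eNbhd E ε) ∩ ball x r ⊆ unp E ε) :
    ∃ (γ₀ g : ℝ → Plane) (S : Set ℝ) (W : Set Plane), IsOpen S ∧ (0 : ℝ) ∈ S ∧ IsOpen W ∧ x ∈ W ∧
      γ₀ 0 = x ∧ ⟪g 0, x - y⟫ = 0 ∧
      (∀ s ∈ S, HasStrictDerivAt γ₀ (g s) s) ∧ (∀ s ∈ S, g s ≠ 0) ∧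
      (∀ s ∈ S, ⟪rot (x - y), γ₀ s - x⟫ = s) ∧
      (∀ s ∈ S, γ₀ s ∈ frontier (eNbhd E ε)) ∧
      (∀ z ∈ W, z ∈ frontier (eNbhd E ε) → γ₀ (⟪rot (x - y), z - x⟫) = z) := by
  obtain ⟨U, hU, hxU, hUf⟩ := frontier_of_eq hE hε hne hDx hxy hu
  obtain ⟨ρ, hρ, hnear⟩ := nearest_close hE hDx hu (half_pos hε)
  set v := x - y with hv
  have hvn : ‖v‖ = ε := by rw [hv, ← dist_eq_norm, hxy]
  have hv0 : v ≠ 0 := by rw [← norm_pos_iff, hvn]; exact hε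
  obtain ⟨ex, hex, hexd⟩ := local_equiv (x := x) hE hne hv0 hDx hu (by
    rw [← hv, real_inner_self_eq_norm_sq]; positivity)
  set Φ : Plane → ℝ × ℝ := fun p => (⟪rot v, p - x⟫, infDist p E ^ 2) with hΦ
  set H := hexd.toOpenPartialHomeomorph Φ with hH
  have hHc : ∀ p, H p = Φ p := fun p => rfl
  have hxs : x ∈ H.source := hexd.mem_toOpenPartialHomeomorph_source
  have hΦx : Φ x = (0, ε ^ 2) := by simp [hΦ, hDx]
  set V : Set Plane := U ∩ ball x (min r (min ρ (ε / 2))) with hVdef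
  have hV : IsOpen V := hU.inter isOpen_ball
  have hxV : x ∈ V := ⟨hxU, mem_ball_self (by positivity)⟩
  have hT : IsOpen (H.target ∩ H.symm ⁻¹' V) := H.isOpen_inter_preimage_symm hV
  set S : Set ℝ := (fun s : ℝ => (s, ε ^ 2)) ⁻¹' (H.target ∩ H.symm ⁻¹' V) with hS
  have hSo : IsOpen S := hT.preimage (by fun_prop)
  set γ₀ : ℝ → Plane := fun s => H.symm (s, ε ^ 2) with hγ₀
  have hγ0 : γ₀ 0 = x := by
    simp only [hγ₀]
    rw [← hΦx, ← hHc, H.left_inv hxs]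
  have h0S : (0 : ℝ) ∈ S := by
    refine ⟨?_, ?_⟩
    · show ((0 : ℝ), ε ^ 2) ∈ H.target
      rw [← hΦx, ← hHc]; exact H.map_source hxs
    · show γ₀ 0 ∈ V
      rw [hγ0]; exact hxV
  have hΦγ : ∀ s ∈ S, Φ (γ₀ s) = (s, ε ^ 2) := fun s hs => H.right_inv hs.1
  have hD : ∀ s ∈ S, infDist (γ₀ s) E = ε := by
    intro s hs
    have h1 : infDist (γ₀ s) E ^ 2 = ε ^ 2 := congrArg Prod.snd (hΦγ s hs)
    exact (pow_left_inj₀ infDist_nonneg hε.le two_ne_zero).1 h1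
  have hfr : ∀ s ∈ S, γ₀ s ∈ frontier (eNbhd E ε) := fun s hs => hUf _ hs.2.1 (hD s hs)
  have hder : ∀ s ∈ S, ∃ g : Plane, HasStrictDerivAt γ₀ g s ∧ g ≠ 0 ∧
      ∀ q ∈ E, dist (γ₀ s) q = ε → ⟪g, γ₀ s - q⟫ = 0 := by
    intro s hs
    have hb : γ₀ s ∈ ball x (min r (min ρ (ε / 2))) := hs.2.2
    rw [mem_ball, lt_min_iff, lt_min_iff] at hb
    obtain ⟨q, hDq, hqE, hqd, hqu⟩ := unp_spec hE hε hne (hsub ⟨hfr s hs, hb.1⟩)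
    have hq1 := hnear _ hb.2.1 q hqE (by rw [hqd, hDq])
    have hpos : 0 < ⟪γ₀ s - q, v⟫ := by
      have e : γ₀ s - q = v + ((γ₀ s - x) - (q - y)) := by rw [hv]; abel
      rw [e, inner_add_left, real_inner_self_eq_norm_sq, hvn]
      have h1 : ‖(γ₀ s - x) - (q - y)‖ < ε := by
        refine (norm_sub_le _ _).trans_lt ?_
        rw [← dist_eq_norm, ← dist_eq_norm]
        linarith [hb.2.2]
      have h2 := neg_le_of_abs_le (abs_real_inner_le_norm ((γ₀ s - x) - (q - y)) v)
      rw [hvn] at h2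
      nlinarith
    obtain ⟨e, he, hed⟩ := local_equiv (x := x) hE hne hv0 hDq hqu hpos
    have hsy := H.hasStrictFDerivAt_symm (f' := e) hs.1 hed
    have hline : HasStrictDerivAt (fun s : ℝ => (s, ε ^ 2)) ((1 : ℝ), (0 : ℝ)) s :=
      (hasStrictDerivAt_id s).prodMk (hasStrictDerivAt_const s (ε ^ 2))
    have hcomp := hsy.comp_hasStrictDerivAt s hline
    refine ⟨e.symm (1, 0), hcomp, ?_, ?_⟩
    · intro h
      have := congrArg e h
      simp at this
    · intro q' hq' hd'
      rw [hqu q' hq' hd', real_inner_comm]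
      have := he (e.symm (1, 0))
      rw [e.apply_symm_apply] at this
      have := congrArg Prod.snd this
      simp only at this
      linarith
  choose! g hg using hder
  have hyE : y ∈ E := by
    obtain ⟨q, hq, hqd⟩ := exists_nearest hE hne x
    rw [← hu q hq (by rw [hqd, hDx])]; exact hq
  refine ⟨γ₀, g, S, H.source ∩ V, hSo, h0S, H.open_source.inter hV, ⟨hxs, hxV⟩, hγ0, ?_,
    fun s hs => (hg s hs).1, fun s hs => (hg s hs).2.1, ?_, hfr, ?_⟩
  · have := (hg 0 h0S).2.2 y hyE (by rw [hγ0, hxy])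
    rwa [hγ0] at this
  · intro s hs
    exact congrArg Prod.fst (hΦγ s hs)
  · intro z hz hzf
    have h1 : Φ z = (⟪rot v, z - x⟫, ε ^ 2) := by
      simp only [hΦ]; rw [infDist_of_frontier hε hne hzf]
    simp only [hγ₀]
    rw [← h1, ← hHc, H.left_inv hz.1]

lemma forward (hE : IsCompact E) (hε : 0 < ε) {x : Plane} (hx : x ∈ frontier (eNbhd E ε))
    (hs : IsSmoothPt E ε x) :
      ∃ δ > 0, ∃ γ : ℝ → Plane,
        InjOn γ (Icc 0 1) ∧ ContDiffOn ℝ 1 γ (Icc 0 1) ∧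
        (∀ t ∈ Icc (0 : ℝ) 1, derivWithin γ (Icc 0 1) t ≠ 0) ∧
        γ '' Icc 0 1 = frontier (eNbhd E ε) ∩ closedBall x δ := by
  have hne := nonempty_of_frontier hx
  obtain ⟨hxu, r, hr, hsub⟩ := hs
  obtain ⟨y, hDx, hyE, hxy, hu⟩ := unp_spec hE hε hne hxu
  obtain ⟨γ₀, g, S, W, hS, h0S, hW, hxW, hγ0, hg0, hg, hgne, hfst, hfr, hWz⟩ :=
    local_param hE hε hne hDx hxy hu hr hsub
  set v := x - y with hv
  have hvn : ‖v‖ = ε := by rw [hv, ← dist_eq_norm, hxy]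
  set b : ℝ → ℝ := fun s => ⟪v, γ₀ s - x⟫ with hb
  have hbd : HasStrictDerivAt b 0 0 := by
    have h1 := ((innerSL ℝ v).hasStrictFDerivAt (x := γ₀ 0 - x)).comp_hasStrictDerivAt (0 : ℝ)
      ((hg 0 h0S).sub_const x)
    have h2 : innerSL ℝ v (g 0) = 0 := by
      rw [innerSL_apply_apply, real_inner_comm]; exact hg0
    rw [h2] at h1
    exact h1
  have h1 := (hasStrictFDerivAt_iff_isLittleO.1 hbd.hasStrictFDerivAt).def one_half_pos
  rw [nhds_prod_eq, Filter.eventually_prod_self_iff'] at h1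
  obtain ⟨u, hu, h2⟩ := h1
  obtain ⟨s₁, hs₁, hs₁u⟩ := Metric.mem_nhds_iff.1 (inter_mem hu (hS.mem_nhds h0S))
  have hIS : ∀ s, |s| < s₁ → s ∈ u ∧ s ∈ S := fun s hs => hs₁u (by simpa using hs)
  have hlip : ∀ s s', |s| < s₁ → |s'| < s₁ → |b s - b s'| ≤ 1 / 2 * |s - s'| := by
    intro s s' hs hs'
    simpa using h2 s (hIS s hs).1 s' (hIS s' hs').1
  have hb0 : b 0 = 0 := by simp [hb, hγ0]
  set G : ℝ → ℝ := fun s => s ^ 2 + b s ^ 2 with hG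
  have hGn : ∀ s, |s| < s₁ → ε ^ 2 * ‖γ₀ s - x‖ ^ 2 = G s := by
    intro s hs
    have := frame_norm v (γ₀ s - x)
    rw [hvn, real_inner_comm, real_inner_comm (rot v), hfst s (hIS s hs).2] at this
    rw [this]; simp only [hG, hb]; ring
  have hmono : ∀ s s', |s| < s₁ → |s'| < s₁ → 0 ≤ s * s' → |s| < |s'| → G s < G s' := by
    intro s s' hs hs' hss hlt
    have l1 := hlip s' s hs' hs
    have l2 := hlip s 0 hs (by simpa using hs₁)
    have l3 := hlip s' 0 hs' (by simpa using hs₁)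
    rw [hb0, sub_zero, sub_zero] at l2 l3
    have l4 : |b s' + b s| ≤ 1 / 2 * (|s| + |s'|) := by
      refine (abs_add_le _ _).trans ?_
      linarith
    have l5 : |s' - s| = |s'| - |s| := by
      rcases le_total 0 s with h | h <;> rcases le_total 0 s' with h' | h' 
      · rw [abs_of_nonneg h, abs_of_nonneg h'] at *
        rw [abs_of_pos (by linarith)]
      · rw [abs_of_nonneg h, abs_of_nonpos h'] at *
        have : s = 0 := by nlinarith
        subst this; rw [sub_zero, abs_of_nonpos h', sub_zero]
      · rw [abs_of_nonpos h, abs_of_nonneg h'] at *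
        have : s = 0 := by nlinarith
        subst this; rw [sub_zero, abs_of_nonneg h']; simp
      · rw [abs_of_nonpos h, abs_of_nonpos h'] at *
        rw [abs_of_neg (by linarith)]; ring
    have l6 : |(b s' - b s) * (b s' + b s)| ≤ (1 / 2 * (|s'| - |s|)) * (1 / 2 * (|s| + |s'|)) := by
      rw [abs_mul, ← l5]
      gcongr
    have l7 := neg_le_of_abs_le l6
    have l8 : |s| ^ 2 < |s'| ^ 2 := by gcongr
    simp only [hG]
    rw [← sq_abs s, ← sq_abs s']
    nlinarith
  obtain ⟨δ₀, hδ₀, hδW⟩ := Metric.mem_nhds_iff.1 (hW.mem_nhds hxW)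
  set δ := min (δ₀ / 2) (s₁ / ε / 2) with hδ
  have hδpos : 0 < δ := by positivity
  have hδs : ε * δ < s₁ := by
    have : δ ≤ s₁ / ε / 2 := min_le_right _ _
    calc ε * δ ≤ ε * (s₁ / ε / 2) := by gcongr
      _ = s₁ / 2 := by field_simp
      _ < s₁ := by linarith
  have hδb : closedBall x δ ⊆ W := by
    refine (closedBall_subset_ball ?_).trans hδW
    have : δ ≤ δ₀ / 2 := min_le_left _ _
    linarith
  have hεδ : 0 < ε * δ := by positivity
  have habs : ∀ s ∈ Icc (-(ε * δ)) (ε * δ), |s| < s₁ := fun s hs => (abs_le.2 hs).trans_lt hδs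
  have hγc : ContinuousOn γ₀ (Icc (-(ε * δ)) (ε * δ)) := fun s hs =>
    (hg s (hIS s (habs s hs)).2).hasDerivAt.continuousAt.continuousWithinAt
  have hGc : ContinuousOn G (Icc (-(ε * δ)) (ε * δ)) := by
    simp only [hG, hb]; fun_prop
  have hG0 : G 0 = 0 := by simp [hG, hb0]
  obtain ⟨β, hβ, hGβ⟩ : (ε * δ) ^ 2 ∈ G '' Icc 0 (ε * δ) := by
    apply intermediate_value_Icc hεδ.le (hGc.mono (Icc_subset_Icc (by linarith) le_rfl))
    rw [hG0]
    exact ⟨by positivity, by simp only [hG]; nlinarith [sq_nonneg (b (ε * δ))]⟩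
  obtain ⟨α, hα, hGα⟩ : (ε * δ) ^ 2 ∈ G '' Icc (-(ε * δ)) 0 := by
    apply intermediate_value_Icc' (by linarith) (hGc.mono (Icc_subset_Icc le_rfl (by linarith)))
    rw [hG0]
    exact ⟨by positivity, by simp only [hG]; nlinarith [sq_nonneg (b (-(ε * δ)))]⟩
  have hβ0 : 0 < β := by
    rcases hβ.1.eq_or_lt with h | h
    · rw [← h, hG0] at hGβ; exact absurd hGβ (by positivity)
    · exact h
  have hα0 : α < 0 := by
    rcases hα.2.eq_or_lt with h | h
    · rw [h, hG0] at hGα; exact absurd hGα (by positivity)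
    · exact h
  have hsubI : Icc α β ⊆ Icc (-(ε * δ)) (ε * δ) := Icc_subset_Icc hα.1 hβ.2
  have hiff : ∀ s ∈ Icc (-(ε * δ)) (ε * δ), (s ∈ Icc α β ↔ G s ≤ (ε * δ) ^ 2) := by
    intro s hs
    have ha := habs s hs
    have hβa := habs β ⟨by linarith, hβ.2⟩
    have hαa := habs α ⟨hα.1, by linarith⟩
    constructor
    · intro hsI
      rcases le_total 0 s with h | h
      · rcases hsI.2.eq_or_lt with h' | h'
        · rw [h', hGβ]
        · rw [← hGβ]
          refine (hmono s β ha hβa (by positivity) ?_).le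
          rw [abs_of_nonneg h, abs_of_pos hβ0]; exact h'
      · rcases hsI.1.eq_or_lt with h' | h'
        · rw [← h', hGα]
        · rw [← hGα]
          refine (hmono s α ha hαa (mul_nonneg_of_nonpos_of_nonpos h hα0.le) ?_).le
          rw [abs_of_nonpos h, abs_of_neg hα0]; linarith
    · intro hGs
      by_contra hc
      rw [mem_Icc, not_and_or, not_le, not_le] at hc
      rcases hc with h | h
      · have := hmono α s hαa ha (mul_nonneg_of_nonpos_of_nonpos hα0.le (by linarith)) (by
          rw [abs_of_neg hα0, abs_of_neg (by linarith)]; linarith)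
        linarith
      · have := hmono β s hβa ha (mul_nonneg hβ0.le (by linarith)) (by
          rw [abs_of_pos hβ0, abs_of_pos (by linarith)]; linarith)
        linarith
  have hball : ∀ s ∈ Icc (-(ε * δ)) (ε * δ), (γ₀ s ∈ closedBall x δ ↔ G s ≤ (ε * δ) ^ 2) := by
    intro s hs
    rw [← hGn s (habs s hs), mul_pow, mem_closedBall, dist_eq_norm]
    rw [mul_le_mul_iff_right₀ (by positivity), pow_le_pow_iff_left₀ (norm_nonneg _) hδpos.le
      two_ne_zero]
  have hinj : InjOn γ₀ S := by
    intro s hs s' hs' h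
    rw [← hfst s hs, ← hfst s' hs', h]
  obtain ⟨γ, hγ1, hγ2, hγ3, hγ4⟩ := reparam hS hg hgne hinj (hα0.trans hβ0)
    (fun s hs => (hIS s (habs s (hsubI hs))).2)
  refine ⟨δ, hδpos, γ, hγ1, hγ2, hγ3, ?_⟩
  rw [hγ4]
  ext z
  constructor
  · rintro ⟨s, hs, rfl⟩
    exact ⟨hfr s (hIS s (habs s (hsubI hs))).2,
      (hball s (hsubI hs)).2 ((hiff s (hsubI hs)).1 hs)⟩
  · rintro ⟨hzf, hzb⟩
    have hz := hWz z (hδb hzb) hzf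
    have hsI : ⟪rot v, z - x⟫ ∈ Icc (-(ε * δ)) (ε * δ) := by
      apply abs_le.1
      refine (abs_real_inner_le_norm _ _).trans ?_
      rw [norm_rot, hvn]
      gcongr
      rw [← dist_eq_norm]; exact hzb
    refine ⟨_, (hiff _ hsI).2 ((hball _ hsI).1 ?_), hz⟩
    rw [hz]; exact hzb

end fwd2

/-! backward direction -/

lemma extend_curve {γ : ℝ → Plane} (hγ : ContDiffOn ℝ 1 γ (Icc 0 1)) :
    ∃ σ g : ℝ → Plane, (∀ t, HasStrictDerivAt σ (g t) t) ∧ (∀ t ∈ Icc (0 : ℝ) 1, σ t = γ t) ∧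
      ∀ t ∈ Icc (0 : ℝ) 1, g t = derivWithin γ (Icc 0 1) t := by
  have hu : UniqueDiffOn ℝ (Icc (0 : ℝ) 1) := uniqueDiffOn_Icc one_pos
  obtain ⟨hd, hc⟩ := (contDiffOn_one_iff_derivWithin hu).1 hγ
  set g : ℝ → Plane := IccExtend (zero_le_one (α := ℝ))
    ((Icc (0 : ℝ) 1).domRestrict (derivWithin γ (Icc 0 1))) with hg
  have hgc : Continuous g := by
    rw [hg, continuous_IccExtend_iff]
    exact hc.domRestrict
  have hgt : ∀ t ∈ Icc (0 : ℝ) 1, g t = derivWithin γ (Icc 0 1) t := by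
    intro t ht
    rw [hg, IccExtend_of_mem _ _ ht]; rfl
  refine ⟨fun t => γ 0 + ∫ u in (0 : ℝ)..t, g u, g, fun t => ?_, fun t ht => ?_, hgt⟩
  · have := intervalIntegral.integral_hasStrictDerivAt_right (hgc.intervalIntegrable 0 t)
      (hgc.stronglyMeasurableAtFilter _ _) hgc.continuousAt
    exact this.const_add (γ 0)
  · have h1 : ∫ u in (0 : ℝ)..t, g u = γ t - γ 0 := by
      refine intervalIntegral.integral_eq_sub_of_hasDeriv_right_of_le ht.1
        (hd.continuousOn.mono (Icc_subset_Icc le_rfl ht.2)) ?_ (hgc.intervalIntegrable 0 t)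
      intro s hs
      have hs' : s ∈ Icc (0 : ℝ) 1 := ⟨hs.1.le, hs.2.le.trans ht.2⟩
      rw [hgt s hs']
      have h2 := (hd s hs').hasDerivWithinAt
      exact (h2.hasDerivAt (Icc_mem_nhds hs.1 (hs.2.trans_le ht.2))).hasDerivWithinAt
    simp only [h1]; abel

section bwd
variable {E : Set Plane} {ε : ℝ}

lemma eventually_pos_of_deriv {f : ℝ → ℝ} {f' : ℝ} (h : HasDerivAt f f' 0) (h0 : f 0 = 0)
    (hf' : 0 < f') : ∀ᶠ s in 𝓝[>] (0 : ℝ), 0 < f s := by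
  have h1 := (hasDerivWithinAt_iff_tendsto_slope' (lt_irrefl (0 : ℝ))).1
    (h.hasDerivWithinAt (s := Ioi 0))
  filter_upwards [h1.eventually_const_lt hf', self_mem_nhdsWithin] with s hs hs0
  have hs0 : 0 < s := hs0
  rw [slope_def_field, h0, sub_zero, sub_zero] at hs
  exact (div_pos_iff_of_pos_right hs0).1 hs

lemma ball_subset_eNbhd {y : Plane} (hy : y ∈ E) : ball y ε ⊆ eNbhd E ε :=
  fun _ hp => subset_closure (mem_iUnion₂.2 ⟨y, hy, hp⟩)

lemma back_unique (hE : IsCompact E) (hε : 0 < ε) (hne : E.Nonempty) {x z : Plane} {δ : ℝ}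
    {γ : ℝ → Plane}
    (hinj : InjOn γ (Icc 0 1)) (hγ : ContDiffOn ℝ 1 γ (Icc 0 1))
    (hγ' : ∀ t ∈ Icc (0 : ℝ) 1, derivWithin γ (Icc 0 1) t ≠ 0)
    (him : γ '' Icc 0 1 = frontier (eNbhd E ε) ∩ closedBall x δ)
    (hz : z ∈ frontier (eNbhd E ε)) (hzx : z ∈ ball x δ) :
    ∃ y₀, ∀ y ∈ E, dist z y = ε → y = y₀ := by
  obtain ⟨t₀, ht₀, htz⟩ : z ∈ γ '' Icc 0 1 := by
    rw [him]; exact ⟨hz, ball_subset_closedBall hzx⟩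
  obtain ⟨σ, g, hσ, hσγ, hg⟩ := extend_curve hγ
  have hDz := infDist_of_frontier hε hne hz
  set C := eNbhd E ε with hC
  have hCc : IsClosed C := isClosed_eNbhd
  set v := g t₀ with hv
  have hv0 : v ≠ 0 := by rw [hv, hg t₀ ht₀]; exact hγ' t₀ ht₀
  have hvpos : 0 < ‖v‖ := norm_pos_iff.2 hv0
  set Ψ : ℝ × ℝ → Plane := fun p => σ p.1 + p.2 • rot v with hΨ
  have hσz : σ t₀ = z := by rw [hσγ t₀ ht₀, htz]
  have hΨz : Ψ (t₀, 0) = z := by simp [hΨ, hσz]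
  have hσc : Continuous σ := continuous_iff_continuousAt.2 fun t => (hσ t).hasDerivAt.continuousAt
  have hΨc : Continuous Ψ := by simp only [hΨ]; fun_prop
  -- the derivative
  obtain ⟨e, he, hed⟩ : ∃ e : (ℝ × ℝ) ≃L[ℝ] Plane, (∀ p, e p = p.1 • v + p.2 • rot v) ∧
      HasStrictFDerivAt Ψ (e : ℝ × ℝ →L[ℝ] Plane) (t₀, 0) := by
    have h1 : HasStrictFDerivAt (fun p : ℝ × ℝ => σ p.1)
        ((ContinuousLinearMap.fst ℝ ℝ ℝ).smulRight v) (t₀, 0) := by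
      have := (hσ t₀).hasStrictFDerivAt.comp (t₀, (0 : ℝ))
        (hasStrictFDerivAt_fst (𝕜 := ℝ) (E := ℝ) (F := ℝ) (p := (t₀, (0 : ℝ))))
      refine this.congr_fderiv ?_
      ext <;> simp [hv]
    have h2 : HasStrictFDerivAt (fun p : ℝ × ℝ => p.2 • rot v)
        ((ContinuousLinearMap.snd ℝ ℝ ℝ).smulRight (rot v)) (t₀, 0) :=
      ((ContinuousLinearMap.snd ℝ ℝ ℝ).smulRight (rot v)).hasStrictFDerivAt
    have h3 := h1.add h2
    obtain ⟨e, he⟩ := exists_equiv finrank_prod_plane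
      ((ContinuousLinearMap.fst ℝ ℝ ℝ).smulRight v +
        (ContinuousLinearMap.snd ℝ ℝ ℝ).smulRight (rot v)) (by
      rintro ⟨a, b⟩ hw
      have hw : a • v + b • rot v = 0 := hw
      have i1 := congrArg (fun w => ⟪v, w⟫) hw
      have i2 := congrArg (fun w => ⟪rot v, w⟫) hw
      simp only [inner_add_right, inner_smul_right, inner_zero_right, inner_rot,
        real_inner_comm v (rot v), real_inner_self_eq_norm_sq, norm_rot] at i1 i2
      have j : ‖v‖ ^ 2 ≠ 0 := by positivity
      have k1 : a = 0 := by simpa [hv0] using i1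
      have k2 : b = 0 := by simpa [hv0] using i2
      rw [k1, k2]; rfl)
    refine ⟨e, fun p => ?_, he ▸ h3⟩
    have : e p = (e : ℝ × ℝ →L[ℝ] Plane) p := rfl
    rw [this, he]; rfl
  set H := hed.toOpenPartialHomeomorph Ψ with hH
  have hHc : ∀ p, H p = Ψ p := fun p => rfl
  have hps : (t₀, (0 : ℝ)) ∈ H.source := hed.mem_toOpenPartialHomeomorph_source
  obtain ⟨R, hR, hRs⟩ := Metric.mem_nhds_iff.1 (H.open_source.mem_nhds hps)
  -- compactness
  obtain ⟨ρ, hρ, hρt⟩ : ∃ ρ > 0, ∀ t ∈ Icc (0 : ℝ) 1, γ t ∈ ball z ρ → |t - t₀| < R := by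
    set K := Icc (0 : ℝ) 1 \ ball t₀ R with hK
    have hKc : IsCompact (γ '' K) := (isCompact_Icc.diff isOpen_ball).image_of_continuousOn
      (hγ.continuousOn.mono sdiff_subset)
    have hzK : z ∈ (γ '' K)ᶜ := by
      rintro ⟨t, ht, h⟩
      have : t = t₀ := hinj ht.1 ht₀ (h.trans htz.symm)
      apply ht.2; rw [this]; exact mem_ball_self hR
    obtain ⟨ρ, hρ, h⟩ := Metric.mem_nhds_iff.1 (hKc.isClosed.isOpen_compl.mem_nhds hzK)
    refine ⟨ρ, hρ, fun t ht hb => ?_⟩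
    by_contra hcon
    refine h hb ⟨t, ⟨ht, ?_⟩, rfl⟩
    rwa [mem_ball, Real.dist_eq]
  -- the box
  obtain ⟨r, hr, hrR, hrb⟩ : ∃ r > 0, r ≤ R ∧ ∀ p ∈ ball (t₀, (0 : ℝ)) r,
      Ψ p ∈ ball z ρ ∩ ball x δ := by
    have : Ψ ⁻¹' (ball z ρ ∩ ball x δ) ∈ 𝓝 (t₀, (0 : ℝ)) := by
      apply hΨc.continuousAt.preimage_mem_nhds
      rw [hΨz]
      exact (isOpen_ball.inter isOpen_ball).mem_nhds ⟨mem_ball_self hρ, hzx⟩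
    obtain ⟨r, hr, h⟩ := Metric.mem_nhds_iff.1 this
    exact ⟨min r R, by positivity, min_le_right _ _,
      fun p hp => h (ball_subset_ball (min_le_left _ _) hp)⟩
  set B := ball (t₀, (0 : ℝ)) r with hB
  have hBs : B ⊆ H.source := (ball_subset_ball hrR).trans hRs
  have hBf : ∀ p ∈ B, Ψ p ∈ frontier C → p.2 = 0 := by
    intro p hp hpf
    have h1 := hrb p hp
    obtain ⟨t, ht, htp⟩ : Ψ p ∈ γ '' Icc 0 1 := by
      rw [him]; exact ⟨hpf, ball_subset_closedBall h1.2⟩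
    have h2 := hρt t ht (htp ▸ h1.1)
    have h3 : (t, (0 : ℝ)) ∈ H.source := hRs (by
      rw [mem_ball, Prod.dist_eq, max_lt_iff]
      exact ⟨by rwa [Real.dist_eq], by simpa using hR⟩)
    have h4 : Ψ (t, 0) = Ψ p := by
      rw [← htp]; simp [hΨ, hσγ t ht]
    have h5 := H.injOn h3 (hBs hp) h4
    rw [← h5]
  -- the two sides
  have hside : ∀ ς : ℝ, (∀ p ∈ B, 0 < ς * p.2 → Ψ p ∈ interior C) ∨
      (∀ p ∈ B, 0 < ς * p.2 → Ψ p ∈ Cᶜ) := by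
    intro ς
    set P : Set (ℝ × ℝ) := B ∩ {p | 0 < ς * p.2} with hP
    have hPc : Convex ℝ P := by
      refine (convex_ball _ _).inter ?_
      exact convex_halfSpace_gt (f := fun p : ℝ × ℝ => ς * p.2)
        (ς • LinearMap.snd ℝ ℝ ℝ).isLinear 0
    have hpre : IsPreconnected (Ψ '' P) := hPc.isPreconnected.image _ hΨc.continuousOn
    have hcov : Ψ '' P ⊆ interior C ∪ Cᶜ := by
      rintro _ ⟨p, hp, rfl⟩
      by_cases h : Ψ p ∈ C
      · left
        by_contra hi
        have := hBf p hp.1 ⟨subset_closure h, hi⟩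
        have h2 : 0 < ς * p.2 := hp.2
        rw [this, mul_zero] at h2
        exact lt_irrefl _ h2
      · right; exact h
    rcases hpre.subset_or_subset isOpen_interior hCc.isOpen_compl
      (disjoint_compl_right.mono_left interior_subset) hcov with h | h
    · left; exact fun p hp h0 => h ⟨p, ⟨hp, h0⟩, rfl⟩
    · right; exact fun p hp h0 => h ⟨p, ⟨hp, h0⟩, rfl⟩
  have hpt : ∀ O : Set Plane, IsOpen O → z ∈ closure O → ∃ p ∈ B, p.2 ≠ 0 ∧ Ψ p ∈ O := by
    intro O hO hzO
    have h1 : IsOpen (Ψ '' B) := H.isOpen_image_of_subset_source isOpen_ball hBs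
    obtain ⟨_, ⟨p, hp, rfl⟩, hqO⟩ :=
      _root_.mem_closure_iff.1 hzO (Ψ '' B) h1 ⟨(t₀, 0), mem_ball_self hr, hΨz⟩
    have h2 : ∀ᶠ u in 𝓝 p.2, (p.1, u) ∈ B ∩ Ψ ⁻¹' O := by
      have hc : ContinuousAt (fun u : ℝ => (p.1, u)) p.2 := by fun_prop
      exact hc.preimage_mem_nhds ((isOpen_ball.inter (hO.preimage hΨc)).mem_nhds ⟨hp, hqO⟩)
    have h3 : ∀ᶠ u in 𝓝[≠] p.2, (p.1, u) ∈ B ∩ Ψ ⁻¹' O := h2.filter_mono nhdsWithin_le_nhds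
    by_cases h0 : p.2 = 0
    · obtain ⟨u, hu, hu'⟩ := (h3.and self_mem_nhdsWithin).exists
      exact ⟨(p.1, u), hu.1, fun h => hu' (by simpa [h0] using h), hu.2⟩
    · exact ⟨p, hp, h0, hqO⟩
  obtain ⟨q, hqE, hqd⟩ := exists_nearest hE hne z
  rw [hDz] at hqd
  have hzint : z ∈ closure (interior C) := by
    have h1 : ball q ε ⊆ interior C := interior_maximal (ball_subset_eNbhd hqE) isOpen_ball
    refine closure_mono h1 ?_
    rw [closure_ball q hε.ne']
    exact hqd.le
  have hzcompl : z ∈ closure Cᶜ := by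
    rw [closure_compl]; exact hz.2
  obtain ⟨p₁, hp₁, hp₁0, hp₁O⟩ := hpt _ isOpen_interior hzint
  obtain ⟨p₂, hp₂, hp₂0, hp₂O⟩ := hpt _ hCc.isOpen_compl hzcompl
  -- one side is in the complement
  obtain ⟨ς, hς, hςC⟩ : ∃ ς : ℝ, |ς| = 1 ∧ ∀ p ∈ B, 0 < ς * p.2 → Ψ p ∈ Cᶜ := by
    rcases lt_or_gt_of_ne hp₂0 with h | h
    · refine ⟨-1, by simp, ?_⟩
      rcases hside (-1) with h' | h'
      · exact absurd (interior_subset (h' p₂ hp₂ (by linarith))) hp₂O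
      · exact h'
    · refine ⟨1, by simp, ?_⟩
      rcases hside 1 with h' | h'
      · exact absurd (interior_subset (h' p₂ hp₂ (by linarith))) hp₂O
      · exact h'
  have hςς : ς * ς = 1 := by rw [← abs_mul_abs_self, hς, one_mul]
  set m : Plane := (ς * ‖v‖⁻¹) • rot v with hm
  have hmn : ‖m‖ = 1 := by
    rw [hm, norm_smul, norm_rot, norm_mul, Real.norm_eq_abs, hς, norm_inv, norm_norm, one_mul,
      inv_mul_cancel₀ hvpos.ne']
  refine ⟨z - ε • m, fun y hy hyd => ?_⟩
  by_contra hyne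
  set w := (y - z) + ε • m with hw
  have hw0 : 0 < ‖w‖ ^ 2 := by
    have : w ≠ 0 := by
      intro h
      apply hyne
      rw [← sub_eq_zero, ← h, hw]; abel
    positivity
  have hyz : ‖y - z‖ = ε := by rw [← dist_eq_norm, dist_comm, hyd]
  have hwsq : ‖w‖ ^ 2 = 2 * ε ^ 2 + 2 * ε * ⟪y - z, m⟫ := by
    rw [hw, norm_add_sq_real, hyz, norm_smul, hmn, inner_smul_right, Real.norm_of_nonneg hε.le]
    ring
  have hw1 : 0 < ⟪w, y - z⟫ := by
    rw [hw, inner_add_left, real_inner_self_eq_norm_sq, hyz, inner_smul_left, real_inner_comm]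
    simp only [conj_trivial]
    linarith
  have hw2 : 0 < ⟪w, m⟫ := by
    rw [hw, inner_add_left, inner_smul_left, real_inner_self_eq_norm_sq, hmn]
    simp only [conj_trivial]
    have : 0 < ε * (⟪y - z, m⟫ + ε * 1 ^ 2) := by linarith
    exact (mul_pos_iff_of_pos_left hε).1 this
  have hlim : Tendsto (fun s : ℝ => z + s • w) (𝓝[>] 0) (𝓝 z) := by
    have hc : ContinuousAt (fun s : ℝ => z + s • w) 0 := by fun_prop
    have : Tendsto (fun s : ℝ => z + s • w) (𝓝 0) (𝓝 (z + (0 : ℝ) • w)) := hc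
    simp only [zero_smul, add_zero] at this
    exact this.mono_left nhdsWithin_le_nhds
  have ev1 : ∀ᶠ s in 𝓝[>] (0 : ℝ), z + s • w ∈ ball y ε := by
    have hc : ContinuousAt (fun s : ℝ => 2 * ⟪w, y - z⟫ - s * ‖w‖ ^ 2) 0 := by fun_prop
    have h1 : ∀ᶠ s in 𝓝 (0 : ℝ), 0 < 2 * ⟪w, y - z⟫ - s * ‖w‖ ^ 2 :=
      hc.eventually_const_lt (by linarith)
    filter_upwards [h1.filter_mono nhdsWithin_le_nhds, self_mem_nhdsWithin] with s hs hs0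
    have hs0 : 0 < s := hs0
    rw [mem_ball, dist_eq_norm]
    have h2 : ‖z + s • w - y‖ ^ 2 = ε ^ 2 - s * (2 * ⟪w, y - z⟫ - s * ‖w‖ ^ 2) := by
      have : z + s • w - y = s • w - (y - z) := by abel
      rw [this, norm_sub_sq_real, hyz, norm_smul, inner_smul_left, Real.norm_of_nonneg hs0.le]
      simp only [conj_trivial]
      ring
    refine lt_of_pow_lt_pow_left₀ 2 hε.le ?_
    rw [h2]
    linarith [mul_pos hs0 hs]
  have hzt : z ∈ H.target := by rw [← hΨz, ← hHc]; exact H.map_source hps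
  have hHz : H.symm z = (t₀, 0) := by
    rw [← hΨz, ← hHc, H.left_inv hps]
  have ev2 : ∀ᶠ s in 𝓝[>] (0 : ℝ), z + s • w ∈ H.target ∧ H.symm (z + s • w) ∈ B := by
    have h1 : H.target ∩ H.symm ⁻¹' B ∈ 𝓝 z := by
      refine (H.isOpen_inter_preimage_symm isOpen_ball).mem_nhds ⟨hzt, ?_⟩
      rw [mem_preimage, hHz]; exact mem_ball_self hr
    exact hlim.eventually h1
  have ev3 : ∀ᶠ s in 𝓝[>] (0 : ℝ), 0 < ς * (H.symm (z + s • w)).2 := by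
    have hsy : HasFDerivAt H.symm (e.symm : Plane →L[ℝ] ℝ × ℝ) (z + (0 : ℝ) • w) := by
      rw [zero_smul, add_zero]
      exact (H.hasStrictFDerivAt_symm (f' := e) hzt (by rw [hHz]; exact hed)).hasFDerivAt
    have hl : HasDerivAt (fun s : ℝ => z + s • w) w 0 := by
      have := ((hasDerivAt_id (0 : ℝ)).smul_const w).const_add z
      rw [one_smul] at this
      exact this
    have h1 := hsy.comp_hasDerivAt (0 : ℝ) hl
    have h2 : HasDerivAt (fun s : ℝ => (H.symm (z + s • w)).2) (e.symm w).2 0 :=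
      (ContinuousLinearMap.snd ℝ ℝ ℝ).hasFDerivAt.comp_hasDerivAt (0 : ℝ) h1
    refine eventually_pos_of_deriv (h2.const_mul ς) (by simp [hHz]) ?_
    have h3 := he (e.symm w)
    rw [e.apply_symm_apply] at h3
    have h4 : ⟪w, m⟫ = ‖v‖ * (ς * (e.symm w).2) := by
      rw [hm, inner_smul_right]
      conv_lhs => rw [h3]
      rw [inner_add_left, inner_smul_left, inner_smul_left, inner_rot, real_inner_self_eq_norm_sq,
        norm_rot]
      simp only [conj_trivial]
      field_simp
      ring
    rw [h4] at hw2
    exact (mul_pos_iff_of_pos_left hvpos).1 hw2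
  obtain ⟨s, ⟨h1, h2, h2'⟩, h3⟩ := (ev1.and ev2 |>.and ev3).exists
  have h4 := hςC _ h2' h3
  have h5 : Ψ (H.symm (z + s • w)) = z + s • w := H.right_inv h2
  rw [h5] at h4
  exact h4 (ball_subset_eNbhd hy h1)

lemma backward (hE : IsCompact E) (hε : 0 < ε) {x : Plane} (hx : x ∈ frontier (eNbhd E ε))
    (h : ∃ δ > 0, ∃ γ : ℝ → Plane,
        InjOn γ (Icc 0 1) ∧ ContDiffOn ℝ 1 γ (Icc 0 1) ∧
        (∀ t ∈ Icc (0 : ℝ) 1, derivWithin γ (Icc 0 1) t ≠ 0) ∧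
        γ '' Icc 0 1 = frontier (eNbhd E ε) ∩ closedBall x δ) : IsSmoothPt E ε x := by
  obtain ⟨δ, hδ, γ, hinj, hγ, hγ', him⟩ := h
  have hne := nonempty_of_frontier hx
  have key : frontier (eNbhd E ε) ∩ ball x δ ⊆ unp E ε := by
    rintro z ⟨hz, hzx⟩
    obtain ⟨y₀, hy₀⟩ := back_unique hE hε hne hinj hγ hγ' him hz hzx
    have hDz := infDist_of_frontier hε hne hz
    obtain ⟨q, hqE, hqd⟩ := exists_nearest hE hne z
    rw [hDz] at hqd
    refine ⟨hz, q, ?_⟩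
    ext y
    rw [mem_contributors_iff hE hε hDz, mem_singleton_iff]
    constructor
    · rintro ⟨h1, h2⟩
      rw [hy₀ y h1 h2, hy₀ q hqE hqd]
    · rintro rfl
      exact ⟨hqE, hqd⟩
  exact ⟨key ⟨hx, mem_ball_self hδ⟩, δ, hδ, key⟩

end bwd


/-- Characterisation of smooth points: a boundary point is smooth if and only if near it
the boundary of `E_ε` is a simple `C¹`-curve (with nowhere-vanishing derivative). -/
theorem characterisation_of_smooth_points (E : Set Plane) (hE : IsCompact E) {ε : ℝ}
    (hε : 0 < ε) (x : Plane) (hx : x ∈ frontier (eNbhd E ε)) :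
    IsSmoothPt E ε x ↔
      ∃ δ > 0, ∃ γ : ℝ → Plane,
        InjOn γ (Icc 0 1) ∧ ContDiffOn ℝ 1 γ (Icc 0 1) ∧
        (∀ t ∈ Icc (0 : ℝ) 1, derivWithin γ (Icc 0 1) t ≠ 0) ∧
        γ '' Icc 0 1 = frontier (eNbhd E ε) ∩ closedBall x δ := by
  exact ⟨forward hE hε hx, backward hE hε hx⟩

end
end

section
/- Let E ⊆ ℝ² be compact, ε > 0, and let (x_n) be a sequence of pairwise distinct singularities on ∂E_ε with x_n → x for some x ∈ ∂E_ε. Writing Ξ_ext(x_n) = {ξ_n^{(1)}, ξ_n^{(2)}} for each n (allowing ξ_n^{(1)} = ξ_n^{(2)}), we have |⟨ξ_n^{(1)}, ξ_n^{(2)}⟩| → 1 as n → ∞. -/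
open Metric Set Filter Topology RealInnerProductSpace

noncomputable section

lemma aux_dist {E : Set Plane} {ε : ℝ} {z y : Plane} (hz : z ∈ frontier (eNbhd E ε))
    (hy : y ∈ E) : ε ≤ ‖y - z‖ := by
  by_contra! h
  have h1 : ball y ε ⊆ eNbhd E ε :=
    (subset_biUnion_of_mem (u := fun y => ball y ε) hy).trans subset_closure
  have h2 : z ∈ interior (eNbhd E ε) := by
    refine interior_maximal h1 isOpen_ball ?_
    rw [mem_ball, dist_comm, dist_eq_norm]
    exact h
  exact hz.2 h2

lemma aux_plane {a p e : Plane} (ha : a ≠ 0) (hp : ‖p‖ = 1) (he : ‖e‖ = 1)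
    (h1 : ⟪a, p⟫ = 0) (h2 : ⟪a, e⟫ = 0) : p = e ∨ p = -e := by
  have hcross : p 0 * e 1 - p 1 * e 0 = 0 := by
    by_contra hc
    apply ha
    simp only [PiLp.inner_apply, Fin.sum_univ_two, RCLike.inner_apply, conj_trivial] at h1 h2
    ext i
    fin_cases i
    · have : a 0 * (p 0 * e 1 - p 1 * e 0) = 0 := by linear_combination e 1 * h1 - p 1 * h2
      simpa [hc] using this
    · have : a 1 * (p 0 * e 1 - p 1 * e 0) = 0 := by linear_combination p 0 * h2 - e 0 * h1
      simpa [hc] using this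
  have hp2 : p 0 ^ 2 + p 1 ^ 2 = 1 := by
    have := EuclideanSpace.real_norm_sq_eq p
    rw [hp, Fin.sum_univ_two] at this
    linarith
  have he2 : e 0 ^ 2 + e 1 ^ 2 = 1 := by
    have := EuclideanSpace.real_norm_sq_eq e
    rw [he, Fin.sum_univ_two] at this
    linarith
  have hin : ⟪p, e⟫ = p 0 * e 0 + p 1 * e 1 := by
    simp only [PiLp.inner_apply, Fin.sum_univ_two, RCLike.inner_apply, conj_trivial]
    ring
  have hsq : ⟪p, e⟫ ^ 2 = 1 := by
    rw [hin]
    linear_combination hp2 * (e 0 ^ 2 + e 1 ^ 2) + he2 - (p 0 * e 1 - p 1 * e 0) * hcross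
  rcases (sq_eq_sq_iff_eq_or_eq_neg.mp (hsq.trans (one_pow 2).symm)) with h | h
  · exact Or.inl ((inner_eq_one_iff_of_norm_eq_one (𝕜 := ℝ) hp he).mp h)
  · refine Or.inr ((inner_eq_one_iff_of_norm_eq_one (𝕜 := ℝ) hp (by rwa [norm_neg])).mp ?_)
    rw [inner_neg_right, h, neg_neg]

/-- The limit of contributors is orthogonal to the limiting direction of approach. -/
lemma aux_orth {E : Set Plane} {ε : ℝ} (hE : IsClosed E) {x : Plane}
    (hx : x ∈ frontier (eNbhd E ε)) {v y η : ℕ → Plane} {y0 e : Plane}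
    (hv : ∀ n, v n ∈ frontier (eNbhd E ε)) (hvx : Tendsto v atTop (nhds x))
    (hη : ∀ n, η n = (‖v n - x‖)⁻¹ • (v n - x)) (hηe : Tendsto η atTop (nhds e))
    (hy : ∀ n, y n ∈ E) (hyn : ∀ n, ‖y n - v n‖ = ε) (hy0 : Tendsto y atTop (nhds y0)) :
    ‖y0 - x‖ = ε ∧ ⟪y0 - x, e⟫ = 0 := by
  have hn : ‖y0 - x‖ = ε := by
    have h := (hy0.sub hvx).norm
    simp only [hyn] at h
    exact (tendsto_nhds_unique h tendsto_const_nhds)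
  have hy0E : y0 ∈ E := hE.mem_of_tendsto hy0 (Eventually.of_forall hy)
  have ht : Tendsto (fun n => ‖v n - x‖) atTop (nhds 0) := by
    simpa using (hvx.sub_const x).norm
  have key : ∀ n, ∀ c : Plane, ⟪c, v n - x⟫ = ‖v n - x‖ * ⟪c, η n⟫ := by
    intro n c
    rw [hη, inner_smul_right]
    by_cases h : ‖v n - x‖ = 0
    · rw [norm_eq_zero] at h
      simp [h]
    · field_simp
  refine ⟨hn, le_antisymm ?_ ?_⟩
  · have h1 : ∀ n, 2 * ⟪y0 - x, η n⟫ ≤ ‖v n - x‖ := by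
      intro n
      by_cases h : ‖v n - x‖ = 0
      · rw [hη, h]
        simp
      · have hpos : 0 < ‖v n - x‖ := lt_of_le_of_ne (norm_nonneg _) (Ne.symm h)
        have h2 := aux_dist (hv n) hy0E
        have h3 := norm_sub_sq_real (y0 - x) (v n - x)
        rw [sub_sub_sub_cancel_right, key, hn] at h3
        have h0 : 0 ≤ ε := hn ▸ norm_nonneg _
        have h4 : ε ^ 2 ≤ ‖y0 - v n‖ ^ 2 := by gcongr
        have h5 : ‖v n - x‖ * (2 * ⟪y0 - x, η n⟫) ≤ ‖v n - x‖ * ‖v n - x‖ := by nlinarith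
        exact le_of_mul_le_mul_left h5 hpos
    have h2 : Tendsto (fun n => 2 * ⟪y0 - x, η n⟫) atTop (nhds (2 * ⟪y0 - x, e⟫)) :=
      (tendsto_const_nhds.inner hηe).const_mul 2
    have := le_of_tendsto_of_tendsto' h2 ht h1
    linarith
  · have h1 : ∀ n, -‖v n - x‖ ≤ 2 * ⟪y n - v n, η n⟫ := by
      intro n
      by_cases h : ‖v n - x‖ = 0
      · rw [hη, h]
        simp
      · have hpos : 0 < ‖v n - x‖ := lt_of_le_of_ne (norm_nonneg _) (Ne.symm h)
        have h2 := aux_dist hx (hy n)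
        have h3 := norm_add_sq_real (y n - v n) (v n - x)
        rw [sub_add_sub_cancel, key, hyn] at h3
        have h0 : 0 ≤ ε := hn ▸ norm_nonneg _
        have h4 : ε ^ 2 ≤ ‖y n - x‖ ^ 2 := by gcongr
        have h5 : ‖v n - x‖ * (-‖v n - x‖) ≤ ‖v n - x‖ * (2 * ⟪y n - v n, η n⟫) := by nlinarith
        exact le_of_mul_le_mul_left h5 hpos
    have h2 : Tendsto (fun n => 2 * ⟪y n - v n, η n⟫) atTop (nhds (2 * ⟪y0 - x, e⟫)) :=
      ((hy0.sub hvx).inner hηe).const_mul 2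
    have := le_of_tendsto_of_tendsto' ht.neg h2 h1
    linarith

/-- Geometry of accumulating singularities: along a sequence of pairwise distinct
singularities converging to a boundary point, the extremal outward directions become
increasingly aligned or opposed. -/
theorem geometry_of_accumulating_singularities (E : Set Plane) (hE : IsCompact E)
    {ε : ℝ} (hε : 0 < ε) (x : Plane) (hx : x ∈ frontier (eNbhd E ε)) (u : ℕ → Plane)
    (hinj : Function.Injective u) (hsing : ∀ n, IsSingularity E ε (u n))
    (hconv : Tendsto u atTop (nhds x)) (ξ1 ξ2 : ℕ → Plane)
    (hext : ∀ n, extOutward E ε (u n) = {ξ1 n, ξ2 n}) :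
    Tendsto (fun n => |⟪ξ1 n, ξ2 n⟫|) atTop (nhds 1) := by
  have h1 : ∀ n, ξ1 n ∈ extOutward E ε (u n) := fun n => by rw [hext n]; simp
  have h2 : ∀ n, ξ2 n ∈ extOutward E ε (u n) := fun n => by rw [hext n]; simp
  choose y1 hy1 ho1 using fun n => (h1 n).2
  choose y2 hy2 ho2 using fun n => (h2 n).2
  have hcl := hE.isClosed
  have hf : ∀ n, u n ∈ frontier (eNbhd E ε) := fun n => (hsing n).1
  have hne : ∀ᶠ n in atTop, u n ≠ x := by
    rw [← Nat.cofinite_eq_atTop]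
    have : (u ⁻¹' {x}).Finite := (finite_singleton x).preimage hinj.injOn
    filter_upwards [this.compl_mem_cofinite] with n hn
    exact hn
  refine tendsto_of_subseq_tendsto fun ns hns => ?_
  let η : ℕ → Plane := fun n => (‖u n - x‖)⁻¹ • (u n - x)
  have hK : IsCompact (E ×ˢ E ×ˢ sphere (0 : Plane) 1 ×ˢ sphere (0 : Plane) 1 ×ˢ
      closedBall (0 : Plane) 1) :=
    hE.prod (hE.prod ((isCompact_sphere _ _).prod ((isCompact_sphere _ _).prod
      (isCompact_closedBall _ _))))
  obtain ⟨⟨a, b, p, q, e⟩, -, φ, hφ, hlim⟩ := hK.tendsto_subseq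
    (x := fun n => (y1 (ns n), y2 (ns n), ξ1 (ns n), ξ2 (ns n), η (ns n))) (by
      intro n
      refine ⟨hcl.frontier_subset (hy1 _).1, hcl.frontier_subset (hy2 _).1, ?_, ?_, ?_⟩
      · simpa using (h1 (ns n)).1.1
      · simpa using (h2 (ns n)).1.1
      · rw [mem_closedBall_zero_iff, norm_smul, norm_inv, norm_norm]
        exact inv_mul_le_one)
  simp only [nhds_prod_eq, tendsto_prod_iff', Function.comp_def] at hlim
  obtain ⟨la, lb, lp, lq, le⟩ := hlim
  refine ⟨φ, ?_⟩
  have hm : Tendsto (fun n => ns (φ n)) atTop atTop := hns.comp hφ.tendsto_atTop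
  have hvx : Tendsto (fun n => u (ns (φ n))) atTop (nhds x) := hconv.comp hm
  obtain ⟨na, oa⟩ := aux_orth hcl hx (fun n => hf (ns (φ n))) hvx (fun n => rfl) le
    (fun n => hcl.frontier_subset (hy1 _).1) (fun n => (hy1 _).2) la
  obtain ⟨nb, ob⟩ := aux_orth hcl hx (fun n => hf (ns (φ n))) hvx (fun n => rfl) le
    (fun n => hcl.frontier_subset (hy2 _).1) (fun n => (hy2 _).2) lb
  have ne : ‖e‖ = 1 := by
    refine tendsto_nhds_unique le.norm (tendsto_const_nhds.congr' ?_)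
    filter_upwards [hm.eventually hne] with n hn
    have : ‖u (ns (φ n)) - x‖ ≠ 0 := norm_ne_zero_iff.mpr (sub_ne_zero.mpr hn)
    simp only [η]
    rw [norm_smul, norm_inv, norm_norm, inv_mul_cancel₀ this]
  have np : ‖p‖ = 1 :=
    tendsto_nhds_unique lp.norm (tendsto_const_nhds.congr fun n => (h1 _).1.1.symm)
  have nq : ‖q‖ = 1 :=
    tendsto_nhds_unique lq.norm (tendsto_const_nhds.congr fun n => (h2 _).1.1.symm)
  have op : ⟪a - x, p⟫ = 0 :=
    tendsto_nhds_unique ((la.sub hvx).inner lp) (tendsto_const_nhds.congr fun n => (ho1 _).symm)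
  have oq : ⟪b - x, q⟫ = 0 :=
    tendsto_nhds_unique ((lb.sub hvx).inner lq) (tendsto_const_nhds.congr fun n => (ho2 _).symm)
  have za : a - x ≠ 0 := norm_ne_zero_iff.mp (by rw [na]; exact hε.ne')
  have zb : b - x ≠ 0 := norm_ne_zero_iff.mp (by rw [nb]; exact hε.ne')
  have hpq : |⟪p, q⟫| = 1 := by
    rcases aux_plane za np ne op oa with rfl | rfl <;>
      rcases aux_plane zb nq ne oq ob with rfl | rfl <;>
      simp_all
  rw [← hpq]
  exact (lp.inner lq).abs

end
end

section
/- Let E ⊆ ℝ² be compact and ε > 0, and let C(∂E_ε) denote the set of chain singularities on ∂E_ε, i.e. the singularities of types S6, S7 and S8. Then C(∂E_ε) is a closed and totally disconnected subset of ℝ². -/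
open Metric Set Filter Topology RealInnerProductSpace

noncomputable section

namespace ChainAux

variable {E : Set Plane} {ε : ℝ}

lemma mem_eNbhd (hE : IsCompact E) (hε : 0 < ε) {z : Plane} :
    z ∈ eNbhd E ε ↔ ∃ y ∈ E, ‖z - y‖ ≤ ε := by
  have h : eNbhd E ε = Metric.cthickening ε E := by
    unfold eNbhd
    rw [← Metric.thickening_eq_biUnion_ball, closure_thickening hε]
  rw [h, hE.cthickening_eq_biUnion_closedBall hε.le]
  simp [dist_eq_norm]

lemma not_mem_eNbhd (hE : IsCompact E) (hε : 0 < ε) {z : Plane} (hz : z ∉ eNbhd E ε)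
    {y : Plane} (hy : y ∈ E) : ε < ‖z - y‖ := by
  by_contra h
  exact hz ((mem_eNbhd hE hε).2 ⟨y, hy, not_lt.1 h⟩)

lemma le_of_mem_closure (hE : IsCompact E) (hε : 0 < ε) {z : Plane}
    (hz : z ∈ closure (eNbhd E ε)ᶜ) {y : Plane} (hy : y ∈ E) : ε ≤ ‖z - y‖ := by
  have hc : IsClosed {z : Plane | ε ≤ ‖z - y‖} :=
    isClosed_le continuous_const (by fun_prop)
  exact closure_minimal (fun w hw => (not_mem_eNbhd hE hε hw hy).le) hc hz

lemma isClosed_eNbhd : IsClosed (eNbhd E ε) := isClosed_closure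

lemma mem_frontier_iff {x : Plane} :
    x ∈ frontier (eNbhd E ε) ↔ x ∈ eNbhd E ε ∧ x ∈ closure (eNbhd E ε)ᶜ := by
  rw [frontier_eq_closure_inter_closure, isClosed_eNbhd.closure_eq]; rfl

lemma frontier_le (hE : IsCompact E) (hε : 0 < ε) {x : Plane}
    (hx : x ∈ frontier (eNbhd E ε)) {y : Plane} (hy : y ∈ E) : ε ≤ ‖x - y‖ :=
  le_of_mem_closure hE hε (mem_frontier_iff.1 hx).2 hy

lemma mem_contrib (hE : IsCompact E) (hε : 0 < ε) {x : Plane}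
    (hx : x ∈ frontier (eNbhd E ε)) {y : Plane} :
    y ∈ contributors E ε x ↔ y ∈ E ∧ ‖y - x‖ = ε := by
  constructor
  · rintro ⟨h1, h2⟩
    exact ⟨hE.isClosed.frontier_subset h1, h2⟩
  · rintro ⟨h1, h2⟩
    refine ⟨⟨subset_closure h1, fun hi => ?_⟩, h2⟩
    have hcont : Continuous (fun t : ℝ => y + t • (x - y)) := by fun_prop
    have hev : ∀ᶠ t in 𝓝 (0 : ℝ), y + t • (x - y) ∈ interior E := by
      apply hcont.continuousAt.eventually_mem
      simpa using isOpen_interior.mem_nhds hi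
    have hev2 : ∀ᶠ t in 𝓝[>] (0 : ℝ), y + t • (x - y) ∈ interior E :=
      hev.filter_mono nhdsWithin_le_nhds
    have hev3 : ∀ᶠ t in 𝓝[>] (0 : ℝ), t ∈ Ioo (0 : ℝ) 1 := Ioo_mem_nhdsGT one_pos
    obtain ⟨t, ht1, ht2⟩ := (hev2.and hev3).exists
    have h3 := frontier_le hE hε hx (interior_subset ht1)
    have h4 : x - (y + t • (x - y)) = (1 - t) • (x - y) := by module
    rw [h4, norm_smul, norm_sub_rev x y, h2, Real.norm_eq_abs, abs_of_pos (by linarith [ht2.2])] at h3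
    nlinarith [ht2.1]

lemma exists_contrib (hE : IsCompact E) (hε : 0 < ε) {x : Plane}
    (hx : x ∈ frontier (eNbhd E ε)) : ∃ y, y ∈ E ∧ ‖y - x‖ = ε := by
  obtain ⟨y, hy, h⟩ := (mem_eNbhd hE hε).1 (mem_frontier_iff.1 hx).1
  exact ⟨y, hy, by rw [norm_sub_rev]; exact le_antisymm h (frontier_le hE hε hx hy)⟩

/-! Frames in the plane. -/

lemma inner_coord (v w : Plane) : inner ℝ v w = v 0 * w 0 + v 1 * w 1 := by
  simp [PiLp.inner_apply, Fin.sum_univ_two]; ring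

/-- Orthonormal frame. -/
def Frame (ξ p : Plane) : Prop := ‖ξ‖ = 1 ∧ ‖p‖ = 1 ∧ inner ℝ p ξ = 0

/-- Rotation by a right angle. -/
def J (ξ : Plane) : Plane := !₂[-ξ 1, ξ 0]

lemma norm_one_coord {v : Plane} (h : ‖v‖ = 1) : v 0 * v 0 + v 1 * v 1 = 1 := by
  rw [← inner_coord, real_inner_self_eq_norm_sq, h]; norm_num

lemma coord_norm_one {v : Plane} (h : v 0 * v 0 + v 1 * v 1 = 1) : ‖v‖ = 1 := by
  rw [← inner_coord, real_inner_self_eq_norm_sq] at h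
  nlinarith [norm_nonneg v]

lemma frame_J {ξ : Plane} (h : ‖ξ‖ = 1) : Frame ξ (J ξ) := by
  refine ⟨h, coord_norm_one ?_, ?_⟩
  · have := norm_one_coord h
    simp [J]; linarith
  · rw [inner_coord]; simp [J]; ring

lemma Frame.swap {ξ p : Plane} (h : Frame ξ p) : Frame p ξ :=
  ⟨h.2.1, h.1, by rw [real_inner_comm]; exact h.2.2⟩

lemma Frame.neg_right {ξ p : Plane} (h : Frame ξ p) : Frame ξ (-p) :=
  ⟨h.1, by rw [norm_neg]; exact h.2.1, by rw [inner_neg_left, h.2.2, neg_zero]⟩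

lemma Frame.neg_left {ξ p : Plane} (h : Frame ξ p) : Frame (-ξ) p :=
  h.swap.neg_right.swap

lemma Frame.inner_eq {ξ p : Plane} (h : Frame ξ p) (v w : Plane) :
    inner ℝ v w = inner ℝ v ξ * inner ℝ w ξ + inner ℝ v p * inner ℝ w p := by
  obtain ⟨h1, h2, h3⟩ := h
  have e1 := norm_one_coord h1
  have e2 := norm_one_coord h2
  rw [inner_coord] at h3
  simp only [inner_coord]
  set a := ξ 0; set b := ξ 1; set c := p 0; set d := p 1
  set k := a * d - b * c with hk
  have hc : c = -(k * b) := by linear_combination (-c) * e1 + a * h3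
  have hd : d = k * a := by linear_combination (-d) * e1 + b * h3
  have hk2 : k * k = 1 := by linear_combination (c * c + d * d) * e1 + e2 - (c * a + d * b) * h3
  rw [hc, hd]
  linear_combination (-(v 0 * w 0 + v 1 * w 1)) * e1 - (b * v 0 - a * v 1) * (b * w 0 - a * w 1) * hk2

lemma Frame.norm_sq {ξ p : Plane} (h : Frame ξ p) (v : Plane) :
    ‖v‖ ^ 2 = inner ℝ v ξ ^ 2 + inner ℝ v p ^ 2 := by
  rw [← real_inner_self_eq_norm_sq, h.inner_eq]; ring

lemma Frame.ext {ξ p : Plane} (h : Frame ξ p) {v w : Plane}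
    (h1 : inner ℝ v ξ = inner ℝ w ξ) (h2 : inner ℝ v p = inner ℝ w p) : v = w := by
  have := h.norm_sq (v - w)
  rw [inner_sub_left, inner_sub_left, h1, h2] at this
  have h0 : ‖v - w‖ = 0 := by simpa using this
  exact sub_eq_zero.1 (norm_eq_zero.1 h0)

lemma Frame.inner_self {ξ p : Plane} (h : Frame ξ p) :
    inner ℝ ξ ξ = (1 : ℝ) ∧ inner ℝ p p = (1 : ℝ) ∧ inner ℝ p ξ = (0 : ℝ) ∧ inner ℝ ξ p = (0 : ℝ) := by
  refine ⟨?_, ?_, h.2.2, h.swap.2.2⟩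
  · rw [real_inner_self_eq_norm_sq, h.1]; norm_num
  · rw [real_inner_self_eq_norm_sq, h.2.1]; norm_num

/-- a vector of norm `r` perpendicular to `ξ` is `± r p`. -/
lemma Frame.perp {ξ p : Plane} (h : Frame ξ p) {v : Plane} {r : ℝ} (_hr : 0 ≤ r) (hv : ‖v‖ = r)
    (h0 : inner ℝ v ξ = 0) : v = r • p ∨ v = -(r • p) := by
  have h1 := h.norm_sq v
  rw [h0, hv] at h1
  obtain ⟨i1, i2, i3, i4⟩ := h.inner_self
  have h2 : inner ℝ v p = r ∨ inner ℝ v p = -r := by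
    apply sq_eq_sq_iff_eq_or_eq_neg.1; linarith
  rcases h2 with h2 | h2
  · left; apply h.ext <;> simp only [inner_smul_left, inner_neg_left, h0, h2, i2, i3] <;> simp
  · right; apply h.ext <;> simp only [inner_smul_left, inner_neg_left, h0, h2, i2, i3] <;> simp

/-! Outward directions. -/

lemma outward_le (hE : IsCompact E) (hε : 0 < ε) {x ξ y : Plane}
    (hξ : ξ ∈ outwardDirs E ε x) (hy : y ∈ E) (hyx : ‖y - x‖ = ε) :
    inner ℝ (y - x) ξ ≤ 0 := by
  obtain ⟨-, u, hu, hux, hun⟩ := hξ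
  have h1 : Tendsto (fun n => inner ℝ (y - x) ((‖u n - x‖)⁻¹ • (u n - x))) atTop
      (𝓝 (inner ℝ (y - x) ξ)) := tendsto_const_nhds.inner hun
  have h2 : Tendsto (fun n => ‖u n - x‖ / 2) atTop (𝓝 0) := by
    have : Tendsto (fun n => ‖u n - x‖ / 2) atTop (𝓝 (‖x - x‖ / 2)) :=
      ((hux.sub_const x).norm).div_const 2
    simpa using this
  refine le_of_tendsto_of_tendsto' h1 h2 (fun n => ?_)
  have h3 := not_mem_eNbhd hE hε (hu n) hy
  have h4 : ‖u n - y‖ ^ 2 = ‖u n - x‖ ^ 2 - 2 * inner ℝ (y - x) (u n - x) + ‖y - x‖ ^ 2 := by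
    have : u n - y = (u n - x) - (y - x) := by abel
    rw [this, norm_sub_sq_real, real_inner_comm]
  rw [hyx] at h4
  rw [inner_smul_right]
  rcases eq_or_lt_of_le (norm_nonneg (u n - x)) with h0 | h0
  · rw [← h0]; simp
  · rw [inv_mul_le_iff₀ h0]
    nlinarith

lemma outward_nonempty {x : Plane}
    (hx : x ∈ frontier (eNbhd E ε)) : (outwardDirs E ε x).Nonempty := by
  obtain ⟨h1, h2⟩ := mem_frontier_iff.1 hx
  obtain ⟨u, hu, hux⟩ := mem_closure_iff_seq_limit.1 h2
  have hne : ∀ n, ‖u n - x‖ ≠ 0 := fun n h => by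
    have := sub_eq_zero.1 (norm_eq_zero.1 h)
    exact hu n (this ▸ h1)
  have hs : ∀ n, (‖u n - x‖)⁻¹ • (u n - x) ∈ sphere (0 : Plane) 1 := fun n => by
    simp [norm_smul, hne n]
  obtain ⟨ξ, hξ, φ, hφ, hlim⟩ := (isCompact_sphere (0 : Plane) 1).tendsto_subseq hs
  exact ⟨ξ, by simpa using hξ, u ∘ φ, fun n => hu _, hux.comp hφ.tendsto_atTop, hlim⟩

/-- moving strictly away from all contributors leaves the neighbourhood. -/
lemma eventually_not_mem (hE : IsCompact E) (hε : 0 < ε) {x v : Plane}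
    (hx : x ∈ frontier (eNbhd E ε))
    (hv : ∀ y ∈ E, ‖y - x‖ = ε → inner ℝ (y - x) v < 0) :
    ∀ᶠ t in 𝓝[>] (0 : ℝ), x + t • v ∉ eNbhd E ε := by
  by_contra hcon
  have hf : ∃ᶠ t in 𝓝[>] (0 : ℝ), x + t • v ∈ eNbhd E ε := by
    intro h; exact hcon h
  obtain ⟨t, ht, htm⟩ := Filter.exists_seq_forall_of_frequently hf
  have ht0 : Tendsto t atTop (𝓝 0) := ht.mono_right nhdsWithin_le_nhds
  have htp : ∀ᶠ n in atTop, 0 < t n := ht.eventually self_mem_nhdsWithin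
  choose y hy hyn using fun n => (mem_eNbhd hE hε).1 (htm n)
  obtain ⟨y0, hy0, φ, hφ, hlim⟩ := hE.tendsto_subseq hy
  have ht1 : Tendsto (fun n => t (φ n)) atTop (𝓝 0) := ht0.comp hφ.tendsto_atTop
  have l1 : Tendsto (fun n => ‖x + t (φ n) • v - y (φ n)‖) atTop (𝓝 ‖x + (0 : ℝ) • v - y0‖) :=
    ((tendsto_const_nhds.add (ht1.smul_const v)).sub hlim).norm
  have h1 : ‖x - y0‖ ≤ ε := by
    have := le_of_tendsto' l1 (fun n => hyn (φ n))
    simpa using this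
  have h2 : ‖y0 - x‖ = ε := by
    rw [norm_sub_rev]; exact le_antisymm h1 (frontier_le hE hε hx hy0)
  have h3 := hv y0 hy0 h2
  have l2 : Tendsto (fun n => inner ℝ (y (φ n) - x) v) atTop (𝓝 (inner ℝ (y0 - x) v)) :=
    (hlim.sub_const x).inner tendsto_const_nhds
  obtain ⟨n, hn1, hn2⟩ := ((l2.eventually (gt_mem_nhds h3)).and
    (hφ.tendsto_atTop.eventually htp)).exists
  have h4 := frontier_le hE hε hx (hy (φ n))
  have h5 : ‖x + t (φ n) • v - y (φ n)‖ ^ 2 = t (φ n) ^ 2 * ‖v‖ ^ 2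
      - 2 * t (φ n) * inner ℝ (y (φ n) - x) v + ‖x - y (φ n)‖ ^ 2 := by
    have : x + t (φ n) • v - y (φ n) = t (φ n) • v - (y (φ n) - x) := by abel
    rw [this, norm_sub_sq_real, inner_smul_left, norm_smul, mul_pow, Real.norm_eq_abs, sq_abs,
      real_inner_comm, norm_sub_rev x]
    simp; ring
  have h6 := hyn (φ n)
  have h7 : 0 < t (φ n) * -inner ℝ (y (φ n) - x) v := mul_pos hn2 (by linarith)
  nlinarith [norm_nonneg (x + t (φ n) • v - y (φ n)), sq_nonneg (t (φ n) * ‖v‖)]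

lemma mem_outward (hE : IsCompact E) (hε : 0 < ε) {x v w : Plane}
    (hx : x ∈ frontier (eNbhd E ε)) (hv1 : ‖v‖ = 1)
    (hv : ∀ y ∈ E, ‖y - x‖ = ε → inner ℝ (y - x) v ≤ 0)
    (hw : ∀ y ∈ E, ‖y - x‖ = ε → inner ℝ (y - x) w < 0) :
    v ∈ outwardDirs E ε x := by
  have key : ∀ n : ℕ, ∃ t : ℝ, 0 < t ∧ t < 1 / (n + 1 : ℝ) ∧
      x + t • (v + (1 / (n + 1 : ℝ)) • w) ∉ eNbhd E ε := by
    intro n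
    have hn : (0 : ℝ) < 1 / (n + 1 : ℝ) := by positivity
    have := eventually_not_mem hE hε (v := v + (1 / (n + 1 : ℝ)) • w) hx (fun y hy hyx => by
      rw [inner_add_right, inner_smul_right]
      have := hv y hy hyx
      have := mul_pos_of_neg_of_neg (hw y hy hyx) (neg_lt_zero.2 hn)
      linarith)
    have h2 : ∀ᶠ t in 𝓝[>] (0 : ℝ), t ∈ Ioo 0 (1 / (n + 1 : ℝ)) := Ioo_mem_nhdsGT hn
    obtain ⟨t, ht, ht2⟩ := (this.and h2).exists
    exact ⟨t, ht2.1, ht2.2, ht⟩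
  choose t ht0 ht1 ht2 using key
  have hl : Tendsto (fun n : ℕ => 1 / (n + 1 : ℝ)) atTop (𝓝 0) :=
    tendsto_one_div_add_atTop_nhds_zero_nat
  have htl : Tendsto t atTop (𝓝 0) :=
    squeeze_zero (fun n => (ht0 n).le) (fun n => (ht1 n).le) hl
  have hvl : Tendsto (fun n : ℕ => v + (1 / (n + 1 : ℝ)) • w) atTop (𝓝 v) := by
    have := (tendsto_const_nhds (x := v)).add (hl.smul_const w)
    simpa using this
  refine ⟨hv1, fun n => x + t n • (v + (1 / (n + 1 : ℝ)) • w), ht2, ?_, ?_⟩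
  · have := (tendsto_const_nhds (x := x)).add (htl.smul hvl)
    simpa using this
  · have h1 : Tendsto (fun n : ℕ => ‖v + (1 / (n + 1 : ℝ)) • w‖⁻¹ • (v + (1 / (n + 1 : ℝ)) • w))
        atTop (𝓝 (‖v‖⁻¹ • v)) := (hvl.norm.inv₀ (by rw [hv1]; norm_num)).smul hvl
    rw [hv1, inv_one, one_smul] at h1
    refine h1.congr (fun n => ?_)
    have hn := (ht0 n).ne'
    simp only [add_sub_cancel_left, norm_smul, Real.norm_eq_abs, abs_of_pos (ht0 n), mul_inv,
      smul_smul]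
    congr 1
    field_simp

/-! Antipodal contributors. -/

lemma antip_frame (hE : IsCompact E) (hε : 0 < ε) {x p ξ : Plane} (hp : ‖p‖ = 1)
    (h1 : x + ε • p ∈ E) (h2 : x - ε • p ∈ E) (hξ : ξ ∈ outwardDirs E ε x) : Frame ξ p := by
  refine ⟨hξ.1, hp, ?_⟩
  have a1 := outward_le hE hε hξ h1 (by simp [norm_smul, hp, abs_of_pos hε])
  have a2 := outward_le hE hε hξ h2 (by simp [norm_smul, hp, abs_of_pos hε])
  have e1 : x + ε • p - x = ε • p := by abel
  have e2 : x - ε • p - x = -(ε • p) := by abel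
  rw [e1, inner_smul_left] at a1
  rw [e2, inner_neg_left, inner_smul_left] at a2
  simp only [conj_trivial] at a1 a2
  have : ε * inner ℝ p ξ = 0 := by linarith
  rcases mul_eq_zero.1 this with h | h
  · exact absurd h hε.ne'
  · exact h

lemma antip_extOutward (hE : IsCompact E) (hε : 0 < ε) {x p : Plane}
    (hx : x ∈ frontier (eNbhd E ε)) (hp : ‖p‖ = 1)
    (h1 : x + ε • p ∈ E) (h2 : x - ε • p ∈ E) : extOutward E ε x = outwardDirs E ε x := by
  ext ξ
  refine ⟨fun h => h.1, fun h => ⟨h, x + ε • p, ?_, ?_⟩⟩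
  · exact (mem_contrib hE hε hx).2 ⟨h1, by simp [norm_smul, hp, abs_of_pos hε]⟩
  · have := (antip_frame hE hε hp h1 h2 h).2.2
    have e1 : x + ε • p - x = ε • p := by abel
    rw [e1, inner_smul_left, this]; simp

lemma antip_extContrib (hE : IsCompact E) (hε : 0 < ε) {x p : Plane}
    (hx : x ∈ frontier (eNbhd E ε)) (hp : ‖p‖ = 1)
    (h1 : x + ε • p ∈ E) (h2 : x - ε • p ∈ E) :
    extContrib E ε x = {x + ε • p, x - ε • p} := by
  ext y
  constructor
  · rintro ⟨hy, ξ, hξ, h0⟩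
    have hF := antip_frame hE hε hp h1 h2 hξ
    rcases hF.perp hε.le ((mem_contrib hE hε hx).1 hy).2 h0 with h | h
    · left; rw [← h]; abel
    · right; simp only [mem_singleton_iff]; rw [sub_eq_add_neg, ← h]; abel
  · obtain ⟨ξ, hξ⟩ := outward_nonempty hx
    have hF := antip_frame hE hε hp h1 h2 hξ
    rintro (h | h)
    · subst h
      refine ⟨(mem_contrib hE hε hx).2 ⟨h1, by simp [norm_smul, hp, abs_of_pos hε]⟩, ξ, hξ, ?_⟩
      have e1 : x + ε • p - x = ε • p := by abel
      rw [e1, inner_smul_left, hF.2.2]; simp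
    · simp only [mem_singleton_iff] at h
      subst h
      refine ⟨(mem_contrib hE hε hx).2 ⟨h2, by simp [norm_smul, hp, abs_of_pos hε]⟩, ξ, hξ, ?_⟩
      have e1 : x - ε • p - x = -(ε • p) := by abel
      rw [e1, inner_neg_left, inner_smul_left, hF.2.2]; simp

/-- The general structure of extremal contributors. -/
lemma ext_structure (hE : IsCompact E) (hε : 0 < ε) {u : Plane}
    (hu : u ∈ frontier (eNbhd E ε)) :
    ∃ y1 y2, extContrib E ε u = {y1, y2} ∧ ‖y1 - u‖ = ε ∧ ‖y2 - u‖ = ε ∧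
      ∀ y ∈ E, ∀ y' ∈ E, ‖y - u‖ = ε → ‖y' - u‖ = ε →
        inner ℝ (y1 - u) (y2 - u) ≤ inner ℝ (y - u) (y' - u) := by
  by_cases hA : ∃ p : Plane, ‖p‖ = 1 ∧ u + ε • p ∈ E ∧ u - ε • p ∈ E
  · obtain ⟨p, hp, h1, h2⟩ := hA
    refine ⟨_, _, antip_extContrib hE hε hu hp h1 h2, by simp [norm_smul, hp, abs_of_pos hε],
      by simp [norm_smul, hp, abs_of_pos hε], fun y _ y' _ hy hy' => ?_⟩
    have e1 : u + ε • p - u = ε • p := by abel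
    have e2 : u - ε • p - u = -(ε • p) := by abel
    rw [e1, e2, inner_neg_right, real_inner_self_eq_norm_sq, norm_smul, hp, Real.norm_eq_abs,
      abs_of_pos hε]
    have := abs_real_inner_le_norm (y - u) (y' - u)
    rw [hy, hy'] at this
    have := (abs_le.1 this).1
    nlinarith
  obtain ⟨ξ, hξ⟩ := outward_nonempty hu
  have hF := frame_J hξ.1
  set q := J ξ
  set θ : Plane → ℝ := fun y => Real.arcsin (inner ℝ (y - u) q / ε) with hθ
  have hθc : Continuous θ := by
    apply Real.continuous_arcsin.comp
    fun_prop
  set C : Set Plane := E ∩ sphere u ε with hC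
  have hCc : IsCompact C := hE.inter_right isClosed_sphere
  have memC : ∀ y, y ∈ C ↔ y ∈ E ∧ ‖y - u‖ = ε := by
    intro y; simp [hC, dist_eq_norm]
  have hCne : C.Nonempty := by
    obtain ⟨y, hy⟩ := exists_contrib hE hε hu
    exact ⟨y, (memC y).2 hy⟩
  have hnorm : ∀ y ∈ C, inner ℝ (y - u) ξ ^ 2 + inner ℝ (y - u) q ^ 2 = ε ^ 2 := by
    intro y hy
    rw [← hF.norm_sq, ((memC y).1 hy).2]
  have hsin : ∀ y ∈ C, inner ℝ (y - u) q = ε * Real.sin (θ y) := by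
    intro y hy
    have h1 := hnorm y hy
    have h2 : |inner ℝ (y - u) q| ≤ ε := by
      apply abs_le_of_sq_le_sq _ hε.le; nlinarith [sq_nonneg (inner ℝ (y - u) ξ : ℝ)]
    have h3 := abs_le.1 h2
    simp only [hθ]
    rw [Real.sin_arcsin]
    · field_simp
    · rw [le_div_iff₀ hε]; linarith
    · rw [div_le_iff₀ hε]; linarith
  have hθ1 : ∀ y, -(Real.pi / 2) ≤ θ y := fun y => Real.neg_pi_div_two_le_arcsin _
  have hθ2 : ∀ y, θ y ≤ Real.pi / 2 := fun y => Real.arcsin_le_pi_div_two _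
  have hcos : ∀ y ∈ C, inner ℝ (y - u) ξ = -(ε * Real.cos (θ y)) := by
    intro y hy
    have h1 := hnorm y hy
    rw [hsin y hy] at h1
    have h2 := outward_le hE hε hξ ((memC y).1 hy).1 ((memC y).1 hy).2
    have h3 : 0 ≤ Real.cos (θ y) := Real.cos_nonneg_of_neg_pi_div_two_le_of_le (hθ1 y) (hθ2 y)
    have h4 : (inner ℝ (y - u) ξ : ℝ) ^ 2 = (ε * Real.cos (θ y)) ^ 2 := by
      have := Real.sin_sq_add_cos_sq (θ y)
      linear_combination h1 - ε ^ 2 * this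
    rcases sq_eq_sq_iff_eq_or_eq_neg.1 h4 with h | h
    · have : 0 ≤ ε * Real.cos (θ y) := by positivity
      linarith
    · exact h
  have hinner : ∀ y ∈ C, ∀ z : Plane, inner ℝ (y - u) z =
      ε * (-Real.cos (θ y) * inner ℝ z ξ + Real.sin (θ y) * inner ℝ z q) := by
    intro y hy z
    rw [hF.inner_eq, hcos y hy, hsin y hy]; ring
  have hinj : ∀ y ∈ C, ∀ y' ∈ C, θ y = θ y' → y = y' := by
    intro y hy y' hy' h
    have : y - u = y' - u := hF.ext (by rw [hcos y hy, hcos y' hy', h])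
      (by rw [hsin y hy, hsin y' hy', h])
    exact sub_left_inj.1 this
  obtain ⟨yp, hyp, hmax⟩ := hCc.exists_isMaxOn hCne hθc.continuousOn
  obtain ⟨ym, hym, hmin⟩ := hCc.exists_isMinOn hCne hθc.continuousOn
  have hmax' : ∀ y ∈ C, θ y ≤ θ yp := fun y hy => hmax hy
  have hmin' : ∀ y ∈ C, θ ym ≤ θ y := fun y hy => hmin hy
  obtain ⟨i1, i2, i3, i4⟩ := hF.inner_self
  have hgap : θ yp - θ ym < Real.pi := by
    by_contra hge
    have a1 : θ yp = Real.pi / 2 := by linarith [hθ2 yp, hθ1 ym]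
    have a2 : θ ym = -(Real.pi / 2) := by linarith [hθ2 yp, hθ1 ym]
    apply hA
    refine ⟨q, hF.2.1, ?_, ?_⟩
    · have : yp - u = ε • q := by
        apply hF.ext
        · rw [hcos yp hyp, a1, inner_smul_left, i3]; simp
        · rw [hsin yp hyp, a1, inner_smul_left, i2]; simp
      rw [← this]; simpa using hyp.1
    · have : ym - u = -(ε • q) := by
        apply hF.ext
        · rw [hcos ym hym, a2, inner_neg_left, inner_smul_left, i3]; simp
        · rw [hsin ym hym, a2, inner_neg_left, inner_smul_left, i2]; simp
      rw [sub_eq_add_neg, ← this]; simpa using hym.1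
  set v : ℝ → Plane := fun t => Real.sin t • ξ + Real.cos t • q with hv
  have vξ : ∀ t, inner ℝ (v t) ξ = Real.sin t := by
    intro t; simp only [hv, inner_add_left, inner_smul_left, i1, i3]; simp
  have vq : ∀ t, inner ℝ (v t) q = Real.cos t := by
    intro t; simp only [hv, inner_add_left, inner_smul_left, i2, i4]; simp
  have vn : ∀ t, ‖v t‖ = 1 := by
    intro t
    have := hF.norm_sq (v t)
    rw [vξ, vq, Real.sin_sq_add_cos_sq] at this
    nlinarith [norm_nonneg (v t)]
  have vin : ∀ y ∈ C, ∀ t, inner ℝ (y - u) (v t) = ε * Real.sin (θ y - t) := by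
    intro y hy t
    rw [hinner y hy, vξ, vq, Real.sin_sub]; ring
  have hw : ∀ y ∈ E, ‖y - u‖ = ε →
      inner ℝ (y - u) (v ((θ yp + θ ym) / 2 + Real.pi / 2)) < 0 := by
    intro y hy hyu
    have hy' := (memC y).2 ⟨hy, hyu⟩
    rw [vin y hy']
    have b1 := hmax' y hy'
    have b2 := hmin' y hy'
    apply mul_neg_of_pos_of_neg hε
    apply Real.sin_neg_of_neg_of_neg_pi_lt <;> linarith
  have hvp : v (θ yp) ∈ outwardDirs E ε u := by
    refine mem_outward hE hε hu (vn _) (fun y hy hyu => ?_) hw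
    have hy' := (memC y).2 ⟨hy, hyu⟩
    rw [vin y hy']
    apply mul_nonpos_of_nonneg_of_nonpos hε.le
    apply Real.sin_nonpos_of_nonpos_of_neg_pi_le
    · linarith [hmax' y hy']
    · linarith [hmin' y hy']
  have hvm : -v (θ ym) ∈ outwardDirs E ε u := by
    refine mem_outward hE hε hu (by rw [norm_neg]; exact vn _) (fun y hy hyu => ?_) hw
    have hy' := (memC y).2 ⟨hy, hyu⟩
    rw [inner_neg_right, vin y hy', neg_nonpos]
    apply mul_nonneg hε.le
    apply Real.sin_nonneg_of_nonneg_of_le_pi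
    · linarith [hmin' y hy']
    · linarith [hmax' y hy']
  have hcontr : ∀ y, y ∈ contributors E ε u ↔ y ∈ C := fun y => by
    rw [mem_contrib hE hε hu, memC]
  refine ⟨yp, ym, ?_, ((memC _).1 hyp).2, ((memC _).1 hym).2, ?_⟩
  · ext y
    constructor
    · rintro ⟨hy, ζ, hζ, h0⟩
      have hy' := (hcontr y).1 hy
      rw [hinner y hy'] at h0
      have h0' : -Real.cos (θ y) * inner ℝ ζ ξ + Real.sin (θ y) * inner ℝ ζ q = 0 := by
        rcases mul_eq_zero.1 h0 with h | h
        · exact absurd h hε.ne'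
        · exact h
      have hn := hF.norm_sq ζ
      rw [hζ.1] at hn
      have sc := Real.sin_sq_add_cos_sq (θ y)
      obtain ⟨k, hk⟩ : ∃ k : ℝ, k = Real.sin (θ y) * inner ℝ ζ ξ + Real.cos (θ y) * inner ℝ ζ q :=
        ⟨_, rfl⟩
      have z1 : inner ℝ ζ ξ = k * Real.sin (θ y) := by
        rw [hk]; linear_combination (-(inner ℝ ζ ξ : ℝ)) * sc - Real.cos (θ y) * h0'
      have z2 : inner ℝ ζ q = k * Real.cos (θ y) := by
        rw [hk]; linear_combination (-(inner ℝ ζ q : ℝ)) * sc + Real.sin (θ y) * h0'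
      have hk2 : k ^ 2 = 1 := by
        rw [z1, z2] at hn
        linear_combination (-(k^2)) * sc - hn
      have hle : ∀ y' ∈ C, k * Real.sin (θ y' - θ y) ≤ 0 := by
        intro y' hy''
        have := outward_le hE hε hζ ((memC _).1 hy'').1 ((memC _).1 hy'').2
        rw [hinner y' hy'', z1, z2] at this
        have e : ε * (-Real.cos (θ y') * (k * Real.sin (θ y)) +
          Real.sin (θ y') * (k * Real.cos (θ y))) = ε * (k * Real.sin (θ y' - θ y)) := by
          rw [Real.sin_sub]; ring
        rw [e] at this
        exact nonpos_of_mul_nonpos_right this hε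
      rcases sq_eq_one_iff.1 hk2 with h | h
      · left
        have h3 := hle yp hyp
        rw [h, one_mul] at h3
        by_contra hne
        have : θ y ≠ θ yp := fun h' => hne (hinj y hy' yp hyp h')
        have h4 := lt_of_le_of_ne (hmax' y hy') this
        have := Real.sin_pos_of_pos_of_lt_pi (x := θ yp - θ y) (by linarith)
          (by linarith [hmin' y hy'])
        linarith
      · right
        have h3 := hle ym hym
        rw [h] at h3
        by_contra hne
        have : θ ym ≠ θ y := fun h' => hne (hinj y hy' ym hym h'.symm)
        have h4 := lt_of_le_of_ne (hmin' y hy') this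
        have := Real.sin_neg_of_neg_of_neg_pi_lt (x := θ ym - θ y) (by linarith)
          (by linarith [hmax' y hy'])
        linarith
    · rintro (h | h)
      · subst h
        refine ⟨(hcontr _).2 hyp, _, hvp, ?_⟩
        rw [vin _ hyp]; simp
      · simp only [mem_singleton_iff] at h
        subst h
        refine ⟨(hcontr _).2 hym, _, hvm, ?_⟩
        rw [inner_neg_right, vin _ hym]; simp
  · have hcc : ∀ y ∈ C, ∀ y' ∈ C, inner ℝ (y - u) (y' - u) = ε ^ 2 * Real.cos (θ y - θ y') := by
      intro y hy y' hy'
      rw [hinner y hy, hcos y' hy', hsin y' hy', Real.cos_sub]; ring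
    intro y hy y' hy' hyu hyu'
    have m1 := (memC y).2 ⟨hy, hyu⟩
    have m2 := (memC y').2 ⟨hy', hyu'⟩
    rw [hcc _ hyp _ hym, hcc _ m1 _ m2]
    apply mul_le_mul_of_nonneg_left _ (by positivity)
    rw [← Real.cos_abs (θ y - θ y')]
    apply Real.cos_le_cos_of_nonneg_of_le_pi (abs_nonneg _) hgap.le
    rw [abs_le]
    constructor <;> linarith [hmax' y m1, hmax' y' m2, hmin' y m1, hmin' y' m2]

def Antip (E : Set Plane) (ε : ℝ) (x p : Plane) : Prop :=
  ‖p‖ = 1 ∧ x + ε • p ∈ E ∧ x - ε • p ∈ E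

lemma chain_antip (hE : IsCompact E) (hε : 0 < ε) {x : Plane} {u : ℕ → Plane}
    (h : IsChainSeq E ε x u) : x ∈ frontier (eNbhd E ε) ∧ ∃ p, Antip E ε x p := by
  obtain ⟨hs, -, hux, y1, y2, hy, hlim⟩ := h
  have hfr : ∀ n, u n ∈ frontier (eNbhd E ε) := fun n => (hs n).1
  refine ⟨isClosed_frontier.mem_of_tendsto hux (Eventually.of_forall hfr), ?_⟩
  have m1 : ∀ n, y1 n ∈ E ∧ ‖y1 n - u n‖ = ε := fun n => by
    have : y1 n ∈ extContrib E ε (u n) := by rw [hy n]; simp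
    exact (mem_contrib hE hε (hfr n)).1 this.1
  have m2 : ∀ n, y2 n ∈ E ∧ ‖y2 n - u n‖ = ε := fun n => by
    have : y2 n ∈ extContrib E ε (u n) := by rw [hy n]; simp
    exact (mem_contrib hE hε (hfr n)).1 this.1
  obtain ⟨z1, hz1, φ, hφ, l1⟩ := hE.tendsto_subseq (fun n => (m1 n).1)
  obtain ⟨z2, hz2, ψ, hψ, l2⟩ := hE.tendsto_subseq (fun n => (m2 (φ n)).1)
  have l1' : Tendsto (fun n => y1 (φ (ψ n))) atTop (𝓝 z1) := l1.comp hψ.tendsto_atTop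
  have l2' : Tendsto (fun n => y2 (φ (ψ n))) atTop (𝓝 z2) := l2
  have hφψ : Tendsto (fun n => φ (ψ n)) atTop atTop := hφ.tendsto_atTop.comp hψ.tendsto_atTop
  have lu : Tendsto (fun n => u (φ (ψ n))) atTop (𝓝 x) := hux.comp hφψ
  have n1 : ‖z1 - x‖ = ε :=
    tendsto_nhds_unique ((l1'.sub lu).norm) (by simp only [(m1 _).2]; exact tendsto_const_nhds)
  have n2 : ‖z2 - x‖ = ε :=
    tendsto_nhds_unique ((l2'.sub lu).norm) (by simp only [(m2 _).2]; exact tendsto_const_nhds)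
  have hin : inner ℝ (ε⁻¹ • (z1 - x)) (ε⁻¹ • (z2 - x)) = (-1 : ℝ) :=
    tendsto_nhds_unique (((l1'.sub lu).const_smul ε⁻¹).inner ((l2'.sub lu).const_smul ε⁻¹))
      (hlim.comp hφψ)
  have k1 : ‖ε⁻¹ • (z1 - x)‖ = 1 := by
    rw [norm_smul, n1, Real.norm_eq_abs, abs_of_pos (inv_pos.2 hε), inv_mul_cancel₀ hε.ne']
  have k2 : ‖ε⁻¹ • (z2 - x)‖ = 1 := by
    rw [norm_smul, n2, Real.norm_eq_abs, abs_of_pos (inv_pos.2 hε), inv_mul_cancel₀ hε.ne']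
  have k3 := norm_add_sq_real (ε⁻¹ • (z1 - x)) (ε⁻¹ • (z2 - x))
  rw [k1, k2, hin] at k3
  have k4 : ‖ε⁻¹ • (z1 - x) + ε⁻¹ • (z2 - x)‖ = 0 := by
    apply pow_eq_zero_iff (two_ne_zero) |>.1; rw [k3]; norm_num
  have k5 : ε⁻¹ • (z2 - x) = -(ε⁻¹ • (z1 - x)) := eq_neg_of_add_eq_zero_right (norm_eq_zero.1 k4)
  refine ⟨ε⁻¹ • (z1 - x), k1, ?_, ?_⟩
  · rw [smul_inv_smul₀ hε.ne']; simpa using hz1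
  · rw [sub_eq_add_neg, ← smul_neg, ← k5, smul_inv_smul₀ hε.ne']; simpa using hz2

lemma cone {x ξ p z : Plane} (hε : 0 < ε) (hF : Frame ξ p)
    (h1 : ε ≤ ‖z - (x + ε • p)‖) (h2 : ε ≤ ‖z - (x - ε • p)‖) (hz : ‖z - x‖ < ε) :
    (inner ℝ (z - x) p : ℝ) ^ 2 ≤ inner ℝ (z - x) ξ ^ 2 := by
  have e1 : z - (x + ε • p) = (z - x) - ε • p := by abel
  have e2 : z - (x - ε • p) = (z - x) + ε • p := by abel
  have s1 := norm_sub_sq_real (z - x) (ε • p)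
  have s2 := norm_add_sq_real (z - x) (ε • p)
  rw [inner_smul_right, norm_smul, hF.2.1, Real.norm_eq_abs, abs_of_pos hε] at s1 s2
  rw [← e1] at s1
  rw [← e2] at s2
  have hn := hF.norm_sq (z - x)
  set a : ℝ := inner ℝ (z - x) ξ
  set b : ℝ := inner ℝ (z - x) p
  have hN := norm_nonneg (z - x)
  have q1 : ε ^ 2 ≤ ‖z - (x + ε • p)‖ ^ 2 := by gcongr
  have q2 : ε ^ 2 ≤ ‖z - (x - ε • p)‖ ^ 2 := by gcongr
  have q3 : ‖z - x‖ ^ 2 < ε ^ 2 := by gcongr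
  have hb : |b| < ε := by
    apply abs_lt_of_sq_lt_sq _ hε.le; nlinarith [sq_nonneg a]
  have hb' : 2 * ε * |b| ≤ a ^ 2 + b ^ 2 := by
    rcases abs_cases b with ⟨h, _⟩ | ⟨h, _⟩ <;> rw [h] <;> nlinarith
  have := abs_nonneg b
  nlinarith [sq_abs b]

lemma near_vertical (hE : IsCompact E) (hε : 0 < ε) {x p : Plane}
    (hx : x ∈ frontier (eNbhd E ε)) (hp : Antip E ε x p) :
    ∃ r > 0, ∀ s p', ‖s - x‖ < r → Antip E ε s p' → 1 / 2 < |(inner ℝ p' p : ℝ)| := by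
  obtain ⟨ξ, hξ⟩ := outward_nonempty hx
  have hF := antip_frame hE hε hp.1 hp.2.1 hp.2.2 hξ
  by_contra hcon
  push Not at hcon
  choose s p' hs hp' hle using fun n : ℕ => hcon (1 / (n + 1 : ℝ)) (by positivity)
  have hs0 : Tendsto (fun n => s n - x) atTop (𝓝 0) :=
    squeeze_zero_norm (fun n => (hs n).le) tendsto_one_div_add_atTop_nhds_zero_nat
  have hsx : Tendsto s atTop (𝓝 x) := by
    have := hs0.add_const x
    simpa using this
  obtain ⟨p0, hp0, φ, hφ, lp⟩ := (isCompact_sphere (0 : Plane) 1).tendsto_subseq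
    (x := p') (fun n => by simpa using (hp' n).1)
  have ls : Tendsto (fun n => s (φ n)) atTop (𝓝 x) := hsx.comp hφ.tendsto_atTop
  have lp' : Tendsto (fun n => p' (φ n)) atTop (𝓝 p0) := lp
  have i1 : x + ε • p0 ∈ E := hE.isClosed.mem_of_tendsto (ls.add (lp'.const_smul ε))
    (Eventually.of_forall fun n => (hp' (φ n)).2.1)
  have i2 : x - ε • p0 ∈ E := hE.isClosed.mem_of_tendsto (ls.sub (lp'.const_smul ε))
    (Eventually.of_forall fun n => (hp' (φ n)).2.2)
  have hn0 : ‖p0‖ = 1 := by simpa using hp0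
  have hF0 := antip_frame hE hε hn0 i1 i2 hξ
  have hl : |(inner ℝ p0 p : ℝ)| ≤ 1 / 2 :=
    le_of_tendsto' (lp'.inner tendsto_const_nhds).abs (fun n => hle (φ n))
  have := hF.inner_self
  rcases hF.perp zero_le_one hn0 hF0.2.2 with h | h
  · rw [h, one_smul, this.2.1] at hl; norm_num at hl
  · rw [h, one_smul, inner_neg_left, this.2.1] at hl; norm_num at hl

lemma td_aux (hE : IsCompact E) (hε : 0 < ε) {S : Set Plane} {x ξ p : Plane} {r d : ℝ}
    (hF : Frame ξ p) (hr : r ≤ ε / 2) (hd : 0 < d)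
    (hS : ∀ s ∈ S, s ∈ frontier (eNbhd E ε) ∧ ∃ p', Antip E ε s p')
    (hv : ∀ s p', ‖s - x‖ < r → Antip E ε s p' → 1 / 2 < |(inner ℝ p' p : ℝ)|)
    (hit : ∀ c, 0 < c → c < d → ∃ s ∈ S, ‖s - x‖ < r ∧ inner ℝ (s - x) ξ = c) : False := by
  obtain ⟨s0, hs0, hs0r, hs0c⟩ := hit (d / 2) (by linarith) (by linarith)
  have hcl := (mem_frontier_iff.1 (hS s0 hs0).1).2
  set O : Set Plane := {z | ‖z - x‖ < r ∧ (0 : ℝ) < inner ℝ (z - x) ξ ∧ inner ℝ (z - x) ξ < d}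
  have hO : IsOpen O := by
    refine IsOpen.and (isOpen_lt ?_ ?_) (IsOpen.and (isOpen_lt ?_ ?_) (isOpen_lt ?_ ?_)) <;> fun_prop
  obtain ⟨q, hq, hqc⟩ := mem_closure_iff.1 hcl O hO ⟨hs0r, by rw [hs0c]; linarith, by rw [hs0c]; linarith⟩
  obtain ⟨s, hs, hsr, hsc⟩ := hit _ hq.2.1 hq.2.2
  obtain ⟨-, p', hp'⟩ := hS s hs
  have hv' := hv s p' hsr hp'
  have g1 := not_mem_eNbhd hE hε hqc hp'.2.1
  have g2 := not_mem_eNbhd hE hε hqc hp'.2.2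
  have hqs : inner ℝ (q - s) ξ = (0 : ℝ) := by
    have : q - s = (q - x) - (s - x) := by abel
    rw [this, inner_sub_left, hsc, sub_self]
  obtain ⟨i1, i2, i3, i4⟩ := hF.inner_self
  have hN := hF.norm_sq (q - s)
  have hI := hF.inner_eq (q - s) p'
  rw [hqs] at hN hI
  have hd2 : ‖q - s‖ < ε := by
    have e : q - s = (q - x) - (s - x) := by abel
    have := norm_sub_le (q - x) (s - x)
    rw [← e] at this
    linarith [hq.1]
  have e1 : q - (s + ε • p') = (q - s) - ε • p' := by abel
  have e2 : q - (s - ε • p') = (q - s) + ε • p' := by abel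
  have s1 := norm_sub_sq_real (q - s) (ε • p')
  have s2 := norm_add_sq_real (q - s) (ε • p')
  rw [inner_smul_right, norm_smul, hp'.1, Real.norm_eq_abs, abs_of_pos hε] at s1 s2
  rw [← e1, hI] at s1
  rw [← e2, hI] at s2
  have q1 : ε ^ 2 < ‖q - (s + ε • p')‖ ^ 2 := by gcongr
  have q2 : ε ^ 2 < ‖q - (s - ε • p')‖ ^ 2 := by gcongr
  set t : ℝ := inner ℝ (q - s) p
  set k : ℝ := inner ℝ p' p
  have ht : |t| < ε := by
    apply abs_lt_of_sq_lt_sq _ hε.le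
    have : ‖q - s‖ ^ 2 < ε ^ 2 := by gcongr
    nlinarith
  have hk : 2 * ε * |t * k| < t ^ 2 := by
    rcases abs_cases (t * k) with ⟨h, _⟩ | ⟨h, _⟩ <;> rw [h] <;> nlinarith
  rw [abs_mul] at hk
  have h0 := abs_nonneg t
  have h5 : |t| * (1 / 2) ≤ |t| * |k| := by gcongr
  have h6 : ε * |t| < |t| * |t| := by
    rw [abs_mul_abs_self]; nlinarith
  nlinarith

lemma antip_td (hE : IsCompact E) (hε : 0 < ε) {S : Set Plane} (hSc : IsPreconnected S)
    (hS : ∀ s ∈ S, s ∈ frontier (eNbhd E ε) ∧ ∃ p', Antip E ε s p') : S.Subsingleton := by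
  intro x hx x' hx'
  by_contra hne
  obtain ⟨hxf, p, hp⟩ := hS x hx
  obtain ⟨ξ, hξ⟩ := outward_nonempty hxf
  have hF := antip_frame hE hε hp.1 hp.2.1 hp.2.2 hξ
  obtain ⟨r0, hr0, hv0⟩ := near_vertical hE hε hxf hp
  have hpos : 0 < ‖x' - x‖ := norm_pos_iff.2 (sub_ne_zero.2 (Ne.symm hne))
  obtain ⟨r, hr, hrr, hre, hrx⟩ : ∃ r > 0, r ≤ r0 ∧ r ≤ ε / 2 ∧ r ≤ ‖x' - x‖ :=
    ⟨min r0 (min (ε / 2) ‖x' - x‖), by positivity, min_le_left _ _,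
      (min_le_right _ _).trans (min_le_left _ _), (min_le_right _ _).trans (min_le_right _ _)⟩
  have hv : ∀ s p', ‖s - x‖ < r → Antip E ε s p' → 1 / 2 < |(inner ℝ p' p : ℝ)| :=
    fun s p' h => hv0 s p' (h.trans_le hrr)
  by_cases hR : ∀ c, 0 < c → c < r / 4 → ∃ s ∈ S, ‖s - x‖ < r ∧ inner ℝ (s - x) ξ = c
  · exact td_aux hE hε hF hre (by positivity) hS hv hR
  by_cases hL : ∀ c, 0 < c → c < r / 4 → ∃ s ∈ S, ‖s - x‖ < r ∧ inner ℝ (s - x) (-ξ) = c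
  · exact td_aux hE hε hF.neg_left hre (by positivity) hS hv hL
  push Not at hR hL
  obtain ⟨c1, c1p, c1r, hc1⟩ := hR
  obtain ⟨c2, c2p, c2r, hc2⟩ := hL
  set U : Set Plane := {z | ‖z - x‖ < r ∧ -c2 < inner ℝ (z - x) ξ ∧ inner ℝ (z - x) ξ < c1}
  set W : Set Plane := {z | r / 2 < ‖z - x‖} ∪ ({z | inner ℝ (z - x) ξ < -c2} ∪
    {z | c1 < inner ℝ (z - x) ξ})
  have hU : IsOpen U := by
    refine IsOpen.and (isOpen_lt ?_ ?_) (IsOpen.and (isOpen_lt ?_ ?_) (isOpen_lt ?_ ?_)) <;> fun_prop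
  have hW : IsOpen W := by
    apply IsOpen.union (isOpen_lt (by fun_prop) (by fun_prop))
    exact IsOpen.union (isOpen_lt (by fun_prop) (by fun_prop)) (isOpen_lt (by fun_prop) (by fun_prop))
  have hcov : S ⊆ U ∪ W := by
    intro s hs
    by_cases hsW : s ∈ W
    · exact Or.inr hsW
    · left
      simp only [W, mem_union, mem_ofPred_eq, not_or, not_lt] at hsW
      obtain ⟨w1, w2, w3⟩ := hsW
      have w4 : ‖s - x‖ < r := by linarith
      refine ⟨w4, lt_of_le_of_ne w2 (fun h => ?_), lt_of_le_of_ne w3 (hc1 s hs w4)⟩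
      apply hc2 s hs w4
      rw [inner_neg_right, ← h, neg_neg]
  obtain ⟨s, hs, hsU, hsW⟩ := hSc U W hU hW hcov
    ⟨x, hx, by simpa [U] using ⟨hr, c2p, c1p⟩⟩ ⟨x', hx', Or.inl (by simp only [mem_ofPred_eq]; linarith)⟩
  obtain ⟨u1, u2, u3⟩ := hsU
  have hc := cone hε hF (frontier_le hE hε (hS s hs).1 hp.2.1)
    (frontier_le hE hε (hS s hs).1 hp.2.2) (by linarith)
  have hn := hF.norm_sq (s - x)
  rcases hsW with h | h | h
  · simp only [mem_ofPred_eq] at h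
    have : (r / 2) ^ 2 < ‖s - x‖ ^ 2 := by gcongr
    have h3 : (inner ℝ (s - x) ξ : ℝ) ^ 2 ≤ (r / 4) ^ 2 :=
      sq_le_sq' (by linarith) (by linarith)
    nlinarith
  · simp only [mem_ofPred_eq] at h; linarith
  · simp only [mem_ofPred_eq] at h; linarith

set_option maxHeartbeats 800000 in
lemma mono_top (hε : 0 < ε) {x ξ p y z z' : Plane} (hF : Frame ξ p)
    (hy : ‖y - (x + ε • p)‖ < ε / 4) (hn : ‖z - x‖ = ‖z' - x‖)
    (ha : 0 < (inner ℝ (z - x) ξ : ℝ)) (ha' : 0 < (inner ℝ (z' - x) ξ : ℝ))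
    (hb : (inner ℝ (z - x) p : ℝ) ^ 2 ≤ 4 * inner ℝ (z - x) ξ ^ 2)
    (hb' : (inner ℝ (z' - x) p : ℝ) ^ 2 ≤ 4 * inner ℝ (z' - x) ξ ^ 2)
    (hlt : (inner ℝ (z - x) p : ℝ) < inner ℝ (z' - x) p) : ‖z' - y‖ < ‖z - y‖ := by
  obtain ⟨i1, i2, i3, i4⟩ := hF.inner_self
  have e1 : y - (x + ε • p) = (y - x) - ε • p := by abel
  have e2 : z - y = (z - x) - (y - x) := by abel
  have e3 : z' - y = (z' - x) - (y - x) := by abel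
  have n0 := hF.norm_sq (y - (x + ε • p))
  have n1 := hF.norm_sq (z - y)
  have n2 := hF.norm_sq (z' - y)
  have n3 := hF.norm_sq (z - x)
  have n4 := hF.norm_sq (z' - x)
  rw [e1] at n0
  rw [e2] at n1
  rw [e3] at n2
  simp only [inner_sub_left, inner_smul_left (𝕜 := ℝ) p, i2, i3, conj_trivial, mul_one, mul_zero,
    sub_zero] at n0
  simp only [inner_sub_left (z - x), inner_sub_left (z' - x)] at n1 n2
  rw [← inner_sub_left, ← inner_sub_left] at n0
  rw [← e1] at n0
  rw [← e2] at n1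
  rw [← e3] at n2
  rw [hn, n4] at n3
  generalize (inner ℝ (z - x) ξ : ℝ) = a at *
  generalize (inner ℝ (z - x) p : ℝ) = b at *
  generalize (inner ℝ (z' - x) ξ : ℝ) = a' at *
  generalize (inner ℝ (z' - x) p : ℝ) = b' at *
  generalize (inner ℝ (y - x) ξ : ℝ) = A at *
  generalize (inner ℝ (y - x) p : ℝ) = B at *
  have q0 : ‖y - (x + ε • p)‖ ^ 2 < (ε / 4) ^ 2 := by gcongr
  have hA : |A| < ε / 4 := by
    apply abs_lt_of_sq_lt_sq _ (by positivity); nlinarith [sq_nonneg (B - ε)]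
  have hB : |B - ε| < ε / 4 := by
    apply abs_lt_of_sq_lt_sq _ (by positivity); nlinarith [sq_nonneg A]
  have hB' : 3 * ε / 4 < B := by linarith [(abs_lt.1 hB).1]
  have c1 : |b| ≤ 2 * a := abs_le_of_sq_le_sq (by nlinarith) (by positivity)
  have c2 : |b'| ≤ 2 * a' := abs_le_of_sq_le_sq (by nlinarith) (by positivity)
  have c3 : |b + b'| ≤ 2 * (a + a') := (abs_add_le b b').trans (by linarith)
  have c4 : (a - a') * (a + a') = (b' - b) * (b + b') := by linarith
  have c5 : |a - a'| ≤ 2 * (b' - b) := by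
    have h1 : |a - a'| * (a + a') = (b' - b) * |b + b'| := by
      have := congrArg abs c4
      rwa [abs_mul, abs_mul, abs_of_pos (by linarith : 0 < a + a'),
        abs_of_pos (by linarith : 0 < b' - b)] at this
    have h2 : (b' - b) * |b + b'| ≤ (b' - b) * (2 * (a + a')) :=
      mul_le_mul_of_nonneg_left c3 (by linarith)
    have h3 : |a - a'| * (a + a') ≤ 2 * (b' - b) * (a + a') := by linarith
    exact le_of_mul_le_mul_right h3 (by linarith)
  have c6 : A * (a - a') ≤ ε / 4 * (2 * (b' - b)) := by
    calc A * (a - a') ≤ |A * (a - a')| := le_abs_self _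
      _ = |A| * |a - a'| := abs_mul _ _
      _ ≤ _ := by gcongr
  have c7 : 3 * ε / 4 * (b' - b) < B * (b' - b) := by
    apply mul_lt_mul_of_pos_right hB'; linarith
  have hεb : 0 < ε * (b' - b) := mul_pos hε (by linarith)
  have e : ((a-A)^2+(b-B)^2) - ((a'-A)^2+(b'-B)^2) = -2*(A*(a-a')) + 2*(B*(b'-b)) := by
    linear_combination (-1)*n3
  have : ‖z' - y‖ ^ 2 < ‖z - y‖ ^ 2 := by rw [n1, n2]; linarith
  exact lt_of_pow_lt_pow_left₀ 2 (norm_nonneg _) this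

/-- Point with given coordinates. -/
def pt (x ξ p : Plane) (ρ t : ℝ) : Plane := x + (Real.sqrt (ρ ^ 2 - t ^ 2) • ξ + t • p)

lemma pt_ξ {x ξ p : Plane} (hF : Frame ξ p) (ρ t : ℝ) :
    inner ℝ (pt x ξ p ρ t - x) ξ = Real.sqrt (ρ ^ 2 - t ^ 2) := by
  obtain ⟨i1, i2, i3, i4⟩ := hF.inner_self
  rw [pt, add_sub_cancel_left, inner_add_left, inner_smul_left, inner_smul_left, i1, i3]; simp

lemma pt_p {x ξ p : Plane} (hF : Frame ξ p) (ρ t : ℝ) :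
    inner ℝ (pt x ξ p ρ t - x) p = t := by
  obtain ⟨i1, i2, i3, i4⟩ := hF.inner_self
  rw [pt, add_sub_cancel_left, inner_add_left, inner_smul_left, inner_smul_left, i2, i4]; simp

lemma pt_norm {x ξ p : Plane} (hF : Frame ξ p) {ρ t : ℝ} (hρ : 0 ≤ ρ) (h : 0 ≤ ρ ^ 2 - t ^ 2) :
    ‖pt x ξ p ρ t - x‖ = ρ := by
  have := hF.norm_sq (pt x ξ p ρ t - x)
  rw [pt_ξ hF, pt_p hF, Real.sq_sqrt h] at this
  have h2 : ‖pt x ξ p ρ t - x‖ ^ 2 = ρ ^ 2 := by linarith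
  exact (pow_left_inj₀ (norm_nonneg _) hρ two_ne_zero).1 h2

lemma pt_eq {x ξ p z : Plane} (hF : Frame ξ p) (h : 0 ≤ (inner ℝ (z - x) ξ : ℝ)) :
    pt x ξ p ‖z - x‖ (inner ℝ (z - x) p) = z := by
  have : pt x ξ p ‖z - x‖ (inner ℝ (z - x) p) - x = z - x := by
    apply hF.ext
    · rw [pt_ξ hF, hF.norm_sq, add_sub_cancel_right, Real.sqrt_sq h]
    · rw [pt_p hF]
  exact sub_left_inj.1 this

lemma continuous_pt (x ξ p : Plane) (ρ : ℝ) : Continuous (pt x ξ p ρ) := by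
  unfold pt; fun_prop

lemma localize (hE : IsCompact E) (hε : 0 < ε) {x T B : Plane}
    (hx : x ∈ frontier (eNbhd E ε)) (honly : ∀ y ∈ E, ‖y - x‖ = ε → y = T ∨ y = B)
    {η : ℝ} (hη : 0 < η) :
    ∃ δ > 0, ∀ z, ‖z - x‖ < δ → ∀ y ∈ E, ‖z - y‖ ≤ ε → ‖y - T‖ < η ∨ ‖y - B‖ < η := by
  by_contra hcon
  push Not at hcon
  choose z hz y hy hzy h1 h2 using fun n : ℕ => hcon (1 / (n + 1 : ℝ)) (by positivity)
  have hs0 : Tendsto (fun n => z n - x) atTop (𝓝 0) :=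
    squeeze_zero_norm (fun n => (hz n).le) tendsto_one_div_add_atTop_nhds_zero_nat
  have hsx : Tendsto z atTop (𝓝 x) := by
    have := hs0.add_const x
    simpa using this
  obtain ⟨y0, hy0, φ, hφ, l⟩ := hE.tendsto_subseq hy
  have l' : Tendsto (fun n => y (φ n)) atTop (𝓝 y0) := l
  have hxy : ‖x - y0‖ ≤ ε :=
    le_of_tendsto' (((hsx.comp hφ.tendsto_atTop).sub l').norm) (fun n => hzy (φ n))
  have hxy' : ‖y0 - x‖ = ε := by
    rw [norm_sub_rev]; exact le_antisymm hxy (frontier_le hE hε hx hy0)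
  have g1 : η ≤ ‖y0 - T‖ := ge_of_tendsto' ((l'.sub_const T).norm) (fun n => h1 (φ n))
  have g2 : η ≤ ‖y0 - B‖ := ge_of_tendsto' ((l'.sub_const B).norm) (fun n => h2 (φ n))
  rcases honly y0 hy0 hxy' with h | h
  · rw [h, sub_self, norm_zero] at g1; linarith
  · rw [h, sub_self, norm_zero] at g2; linarith

lemma limit_side (hE : IsCompact E) (hε : 0 < ε) {x ξ p u : Plane} (hF : Frame ξ p)
    (hu : u ∈ frontier (eNbhd E ε)) {η δ : ℝ} (hη : η ≤ ε / 4)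
    (hloc : ∀ z, ‖z - x‖ < δ → ∀ y ∈ E, ‖z - y‖ ≤ ε →
      ‖y - (x + ε • p)‖ < η ∨ ‖y - (x - ε • p)‖ < η)
    (huδ : ‖u - x‖ < δ) (ha : 0 < (inner ℝ (u - x) ξ : ℝ))
    (hb : (inner ℝ (u - x) p : ℝ) ^ 2 ≤ inner ℝ (u - x) ξ ^ 2)
    (hall : ∀ z, ‖z - x‖ = ‖u - x‖ → 0 < (inner ℝ (z - x) ξ : ℝ) → z ∈ eNbhd E ε) :
    ∃ y ∈ E, ‖y - u‖ = ε ∧ ‖y - (x - ε • p)‖ ≤ η := by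
  have hN := hF.norm_sq (u - x)
  obtain ⟨ρ, hρ⟩ : ∃ ρ, ρ = ‖u - x‖ := ⟨_, rfl⟩
  obtain ⟨b, hbb⟩ : ∃ b : ℝ, b = inner ℝ (u - x) p := ⟨_, rfl⟩
  have hρ0 : 0 ≤ ρ := hρ ▸ norm_nonneg _
  have hpu : pt x ξ p ρ b = u := by rw [hρ, hbb]; exact pt_eq hF ha.le
  rw [← hρ, ← hbb] at hN
  rw [← hbb] at hb
  have ha2 : 0 < (inner ℝ (u - x) ξ : ℝ) ^ 2 := by positivity
  have ev1 : ∀ᶠ t in 𝓝[<] b, t < b := self_mem_nhdsWithin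
  have ev2 : ∀ᶠ t in 𝓝[<] b, 0 < ρ ^ 2 - t ^ 2 := by
    apply Filter.Eventually.filter_mono nhdsWithin_le_nhds
    have : Continuous (fun t : ℝ => ρ ^ 2 - t ^ 2) := by fun_prop
    exact this.continuousAt.eventually (lt_mem_nhds (by linarith))
  have ev3 : ∀ᶠ t in 𝓝[<] b, 0 < 4 * (ρ ^ 2 - t ^ 2) - t ^ 2 := by
    apply Filter.Eventually.filter_mono nhdsWithin_le_nhds
    have : Continuous (fun t : ℝ => 4 * (ρ ^ 2 - t ^ 2) - t ^ 2) := by fun_prop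
    exact this.continuousAt.eventually (lt_mem_nhds (by linarith))
  obtain ⟨t, ht, htg⟩ := Filter.exists_seq_forall_of_frequently
    ((ev1.and (ev2.and ev3)).frequently)
  have htb : Tendsto t atTop (𝓝 b) := ht.mono_right nhdsWithin_le_nhds
  have key : ∀ n, ∃ y ∈ E, ‖pt x ξ p ρ (t n) - y‖ ≤ ε ∧ ‖y - (x - ε • p)‖ < η := by
    intro n
    obtain ⟨t1, t2, t3⟩ := htg n
    have hn : ‖pt x ξ p ρ (t n) - x‖ = ρ := pt_norm hF hρ0 t2.le
    have hpos : 0 < (inner ℝ (pt x ξ p ρ (t n) - x) ξ : ℝ) := by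
      rw [pt_ξ hF]; exact Real.sqrt_pos.2 t2
    obtain ⟨y, hy, hle⟩ := (mem_eNbhd hE hε).1 (hall _ (hn.trans hρ) hpos)
    refine ⟨y, hy, hle, ?_⟩
    rcases hloc _ (by rw [hn, hρ]; exact huδ) y hy hle with h | h
    · exfalso
      have := mono_top hε hF (h.trans_le hη) (hn.trans hρ) hpos ha
        (by rw [pt_ξ hF, pt_p hF, Real.sq_sqrt t2.le]; linarith)
        (by rw [← hbb]; linarith) (by rw [pt_p hF, ← hbb]; exact t1)
      linarith [frontier_le hE hε hu hy]
    · exact h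
  choose y hy hle hB using key
  obtain ⟨y0, hy0, φ, hφ, l⟩ := hE.tendsto_subseq hy
  have l' : Tendsto (fun n => y (φ n)) atTop (𝓝 y0) := l
  have lp : Tendsto (fun n => pt x ξ p ρ (t (φ n))) atTop (𝓝 u) := by
    rw [← hpu]
    exact (continuous_pt x ξ p ρ).continuousAt.tendsto.comp (htb.comp hφ.tendsto_atTop)
  refine ⟨y0, hy0, ?_, le_of_tendsto' ((l'.sub_const _).norm) (fun n => (hB (φ n)).le)⟩
  rw [norm_sub_rev]
  exact le_antisymm (le_of_tendsto' ((lp.sub l').norm) (fun n => hle (φ n)))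
    (frontier_le hE hε hu hy0)

lemma isOpen_norm_image {x : Plane} {W : Set Plane} (hW : IsOpen W) (hx : x ∉ W) :
    IsOpen ((fun z => ‖z - x‖) '' W) := by
  rw [isOpen_iff_mem_nhds]
  rintro _ ⟨z, hz, rfl⟩
  have hne : ‖z - x‖ ≠ 0 := fun h => hx (by
    rw [sub_eq_zero.1 (norm_eq_zero.1 h)] at hz; exact hz)
  have hc : Continuous (fun r : ℝ => x + (r / ‖z - x‖) • (z - x)) := by fun_prop
  have h1 : ∀ᶠ r in 𝓝 ‖z - x‖, x + (r / ‖z - x‖) • (z - x) ∈ W := by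
    apply hc.continuousAt.eventually_mem
    rw [div_self hne, one_smul, add_sub_cancel]
    exact hW.mem_nhds hz
  have h2 : ∀ᶠ r in 𝓝 ‖z - x‖, 0 < r :=
    lt_mem_nhds (lt_of_le_of_ne (norm_nonneg _) (Ne.symm hne))
  filter_upwards [h1, h2] with r hr hr0
  refine ⟨_, hr, ?_⟩
  simp only [add_sub_cancel_left, norm_smul, norm_div, norm_norm, Real.norm_eq_abs,
    abs_of_pos hr0, abs_norm]
  field_simp


lemma arc_mem (hE : IsCompact E) (hε : 0 < ε) {x ξ p z1 z2 : Plane} (hF : Frame ξ p)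
    {η δ ρ t : ℝ} (hη : η ≤ ε / 4)
    (hloc : ∀ z, ‖z - x‖ < δ → ∀ y ∈ E, ‖z - y‖ ≤ ε →
      ‖y - (x + ε • p)‖ < η ∨ ‖y - (x - ε • p)‖ < η)
    (hρ : 0 < ρ) (hρδ : ρ < δ) (hz1 : z1 ∉ eNbhd E ε) (hz2 : z2 ∉ eNbhd E ε)
    (hn1 : ‖z1 - x‖ = ρ) (hn2 : ‖z2 - x‖ = ρ)
    (ha1 : 0 < (inner ℝ (z1 - x) ξ : ℝ)) (ha2 : 0 < (inner ℝ (z2 - x) ξ : ℝ))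
    (hb1 : (inner ℝ (z1 - x) p : ℝ) ^ 2 ≤ inner ℝ (z1 - x) ξ ^ 2)
    (hb2 : (inner ℝ (z2 - x) p : ℝ) ^ 2 ≤ inner ℝ (z2 - x) ξ ^ 2)
    (ht1 : inner ℝ (z1 - x) p ≤ t) (ht2 : t ≤ inner ℝ (z2 - x) p) :
    pt x ξ p ρ t ∈ halfBall x ξ δ ∩ (eNbhd E ε)ᶜ := by
  have n1 := hF.norm_sq (z1 - x)
  have n2 := hF.norm_sq (z2 - x)
  rw [hn1] at n1
  rw [hn2] at n2
  have hρ2 : 0 < ρ ^ 2 := by positivity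
  have htt : 2 * t ^ 2 ≤ ρ ^ 2 := by
    rcases le_total 0 t with h | h
    · have : t ^ 2 ≤ (inner ℝ (z2 - x) p : ℝ) ^ 2 := by gcongr
      linarith
    · have : t ^ 2 ≤ (inner ℝ (z1 - x) p : ℝ) ^ 2 := by nlinarith
      linarith
  have hpos : 0 < ρ ^ 2 - t ^ 2 := by linarith
  have hn := pt_norm (x := x) hF hρ.le hpos.le
  have ha : 0 < (inner ℝ (pt x ξ p ρ t - x) ξ : ℝ) := by
    rw [pt_ξ hF]; exact Real.sqrt_pos.2 hpos
  have hb : (inner ℝ (pt x ξ p ρ t - x) p : ℝ) ^ 2 ≤ 4 * inner ℝ (pt x ξ p ρ t - x) ξ ^ 2 := by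
    rw [pt_p hF, pt_ξ hF, Real.sq_sqrt hpos.le]; linarith
  refine ⟨⟨?_, ha⟩, ?_⟩
  · rw [mem_ball, dist_eq_norm, hn]; exact hρδ
  intro hmem
  obtain ⟨y, hy, hle⟩ := (mem_eNbhd hE hε).1 hmem
  have g1 := not_mem_eNbhd hE hε hz1 hy
  have g2 := not_mem_eNbhd hE hε hz2 hy
  rcases hloc _ (by rw [hn]; exact hρδ) y hy hle with h | h
  · rcases ht2.eq_or_lt with e | hlt
    · have : pt x ξ p ρ t = z2 := by rw [e, ← hn2]; exact pt_eq hF ha2.le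
      rw [this] at hle; linarith
    · have := mono_top hε hF (h.trans_le hη) (hn.trans hn2.symm) ha ha2 hb (by nlinarith)
        (by rw [pt_p hF]; exact hlt)
      linarith
  · rcases ht1.eq_or_lt with e | hlt
    · have : pt x ξ p ρ t = z1 := by rw [← e, ← hn1]; exact pt_eq hF ha1.le
      rw [this] at hle; linarith
    · have h' : ‖y - (x + ε • (-p))‖ < ε / 4 := by
        rw [smul_neg, ← sub_eq_add_neg]; exact h.trans_le hη
      have := mono_top hε hF.neg_right h' (hn.trans hn1.symm) ha ha1
        (by rw [inner_neg_right, neg_sq]; exact hb)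
        (by rw [inner_neg_right, neg_sq]; nlinarith)
        (by rw [inner_neg_right, inner_neg_right, pt_p hF]; linarith)
      linarith

lemma isOpen_halfBall (x ξ : Plane) (δ : ℝ) : IsOpen (halfBall x ξ δ) := by
  have : IsOpen {z : Plane | 0 < (inner ℝ (z - x) ξ : ℝ)} :=
    isOpen_lt continuous_const (by fun_prop)
  exact isOpen_ball.inter this

lemma conn_case (hE : IsCompact E) (hε : 0 < ε) {x ξ p : Plane} (hF : Frame ξ p)
    {η δ : ℝ} (hη : η ≤ ε / 4) (hδ : 0 < δ)
    (hloc : ∀ z, ‖z - x‖ < δ → ∀ y ∈ E, ‖z - y‖ ≤ ε →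
      ‖y - (x + ε • p)‖ < η ∨ ‖y - (x - ε • p)‖ < η)
    (hcone : ∀ z ∈ halfBall x ξ δ ∩ (eNbhd E ε)ᶜ,
      (inner ℝ (z - x) p : ℝ) ^ 2 ≤ inner ℝ (z - x) ξ ^ 2)
    (hR : Ioo 0 δ ⊆ (fun z => ‖z - x‖) '' (halfBall x ξ δ ∩ (eNbhd E ε)ᶜ)) :
    IsConnected (halfBall x ξ δ ∩ (eNbhd E ε)ᶜ) := by
  have hVo : IsOpen (halfBall x ξ δ ∩ (eNbhd E ε)ᶜ) :=
    (isOpen_halfBall x ξ δ).inter isClosed_eNbhd.isOpen_compl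
  have hxV : x ∉ halfBall x ξ δ ∩ (eNbhd E ε)ᶜ := by
    rintro ⟨⟨-, h⟩, -⟩
    simp at h
  have hrad : ∀ z ∈ halfBall x ξ δ ∩ (eNbhd E ε)ᶜ, ‖z - x‖ ∈ Ioo 0 δ := by
    intro z hz
    have := hz.1.1
    rw [mem_ball, dist_eq_norm] at this
    refine ⟨norm_pos_iff.2 ?_, this⟩
    intro h
    rw [sub_eq_zero.1 h] at hz
    exact hxV hz
  refine ⟨?_, ?_⟩
  · obtain ⟨z, hz, -⟩ := hR (show δ / 2 ∈ Ioo 0 δ from ⟨by linarith, by linarith⟩)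
    exact ⟨z, hz⟩
  · intro W1 W2 hW1 hW2 hcov ⟨w1, hw1V, hw1⟩ ⟨w2, hw2V, hw2⟩
    have o1 := isOpen_norm_image (x := x) (hVo.inter hW1) (fun h => hxV h.1)
    have o2 := isOpen_norm_image (x := x) (hVo.inter hW2) (fun h => hxV h.1)
    obtain ⟨ρ, hρ, ⟨z1, ⟨hz1V, hz1⟩, e1⟩, ⟨z2, ⟨hz2V, hz2⟩, e2⟩⟩ :=
      isPreconnected_Ioo (a := (0 : ℝ)) (b := δ) _ _ o1 o2
        (by
          intro r hr
          obtain ⟨z, hz, rfl⟩ := hR hr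
          rcases hcov hz with h | h
          · exact Or.inl ⟨z, ⟨hz, h⟩, rfl⟩
          · exact Or.inr ⟨z, ⟨hz, h⟩, rfl⟩)
        ⟨_, hrad w1 hw1V, w1, ⟨hw1V, hw1⟩, rfl⟩ ⟨_, hrad w2 hw2V, w2, ⟨hw2V, hw2⟩, rfl⟩
    simp only at e1 e2
    have hsub : pt x ξ p ρ '' (uIcc (inner ℝ (z1 - x) p) (inner ℝ (z2 - x) p)) ⊆
        halfBall x ξ δ ∩ (eNbhd E ε)ᶜ := by
      rintro _ ⟨t, ht, rfl⟩
      rcases mem_uIcc.1 ht with ⟨h1, h2⟩ | ⟨h1, h2⟩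
      · exact arc_mem hE hε hF hη hloc hρ.1 hρ.2 hz1V.2 hz2V.2 e1 e2 hz1V.1.2 hz2V.1.2
          (hcone _ hz1V) (hcone _ hz2V) h1 h2
      · exact arc_mem hE hε hF hη hloc hρ.1 hρ.2 hz2V.2 hz1V.2 e2 e1 hz2V.1.2 hz1V.1.2
          (hcone _ hz2V) (hcone _ hz1V) h1 h2
    have hpre : IsPreconnected
        (pt x ξ p ρ '' (uIcc (inner ℝ (z1 - x) p) (inner ℝ (z2 - x) p))) :=
      isPreconnected_uIcc.image _ (continuous_pt x ξ p ρ).continuousOn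
    have p1 : pt x ξ p ρ (inner ℝ (z1 - x) p) = z1 := by
      rw [← e1]; exact pt_eq hF hz1V.1.2.le
    have p2 : pt x ξ p ρ (inner ℝ (z2 - x) p) = z2 := by
      rw [← e2]; exact pt_eq hF hz2V.1.2.le
    obtain ⟨w, hw, hw'⟩ := hpre W1 W2 hW1 hW2 (hsub.trans hcov)
      ⟨z1, ⟨_, left_mem_uIcc, p1⟩, hz1⟩ ⟨z2, ⟨_, right_mem_uIcc, p2⟩, hz2⟩
    exact ⟨w, hsub hw, hw'⟩

lemma exists_closure_diff {R : Set ℝ} {a b : ℝ} (hab : a < b) (hR : IsOpen R) (ha : a ∈ R)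
    (hb : b ∉ R) : ∃ c, a < c ∧ c ≤ b ∧ c ∈ closure R ∧ c ∉ R := by
  have hcl : IsClosed (Icc a b ∩ Rᶜ) := isClosed_Icc.inter hR.isClosed_compl
  have hne : (Icc a b ∩ Rᶜ).Nonempty := ⟨b, ⟨hab.le, le_rfl⟩, hb⟩
  have hbd : BddBelow (Icc a b ∩ Rᶜ) := ⟨a, fun z hz => hz.1.1⟩
  have hc := hcl.csInf_mem hne hbd
  obtain ⟨c, hcc⟩ : ∃ c, c = sInf (Icc a b ∩ Rᶜ) := ⟨_, rfl⟩
  rw [← hcc] at hc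
  have hac : a < c := lt_of_le_of_ne hc.1.1 (fun h => hc.2 (h ▸ ha))
  refine ⟨c, hac, hc.1.2, ?_, hc.2⟩
  have : Ico a c ⊆ R := by
    intro r hr
    by_contra h
    have := csInf_le hbd (show r ∈ Icc a b ∩ Rᶜ from ⟨⟨hr.1, hr.2.le.trans hc.1.2⟩, h⟩)
    rw [← hcc] at this
    exact absurd hr.2 (not_lt.2 this)
  apply closure_mono this
  rw [closure_Ico hac.ne]
  exact ⟨hac.le, le_rfl⟩

lemma dichotomy (hE : IsCompact E) (hε : 0 < ε) {x ξ p : Plane}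
    (hx : x ∈ frontier (eNbhd E ε)) (hF : Frame ξ p) (hA : Antip E ε x p)
    (honly : ∀ y ∈ E, ‖y - x‖ = ε → y = x + ε • p ∨ y = x - ε • p)
    (hξ : ξ ∈ outwardDirs E ε x) :
    (∃ δ > 0, IsConnected (halfBall x ξ δ ∩ (eNbhd E ε)ᶜ)) ∨
    ∀ η > 0, ∃ u ∈ frontier (eNbhd E ε), u ∈ halfBall x ξ η ∧ ∃ y ∈ E, ∃ y' ∈ E,
      ‖y - u‖ = ε ∧ ‖y' - u‖ = ε ∧ ‖y - (x + ε • p)‖ ≤ η ∧ ‖y' - (x - ε • p)‖ ≤ η := by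
  by_contra hcon
  push Not at hcon
  obtain ⟨hnc, η0, hη0, hno⟩ := hcon
  obtain ⟨η, hηd⟩ : ∃ η, η = min η0 (ε / 4) := ⟨_, rfl⟩
  have hη : 0 < η := by rw [hηd]; positivity
  have hηη : η ≤ η0 := hηd ▸ min_le_left _ _
  have hηε : η ≤ ε / 4 := hηd ▸ min_le_right _ _
  obtain ⟨δ1, hδ1, hloc1⟩ := localize hE hε hx honly hη
  obtain ⟨δ, hδd⟩ : ∃ δ, δ = min δ1 (min η0 ε) := ⟨_, rfl⟩
  have hδ : 0 < δ := by rw [hδd]; positivity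
  have hδδ : δ ≤ δ1 := hδd ▸ min_le_left _ _
  have hδη : δ ≤ η0 := hδd ▸ (min_le_right _ _).trans (min_le_left _ _)
  have hδε : δ ≤ ε := hδd ▸ (min_le_right _ _).trans (min_le_right _ _)
  have hloc : ∀ z, ‖z - x‖ < δ → ∀ y ∈ E, ‖z - y‖ ≤ ε →
      ‖y - (x + ε • p)‖ < η ∨ ‖y - (x - ε • p)‖ < η := fun z hz => hloc1 z (hz.trans_le hδδ)
  have hcone0 : ∀ z ∈ closure (eNbhd E ε)ᶜ, ‖z - x‖ < δ →
      (inner ℝ (z - x) p : ℝ) ^ 2 ≤ inner ℝ (z - x) ξ ^ 2 := fun z hz hzδ =>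
    cone hε hF (le_of_mem_closure hE hε hz hA.2.1) (le_of_mem_closure hE hε hz hA.2.2)
      (hzδ.trans_le hδε)
  have hcone : ∀ z ∈ halfBall x ξ δ ∩ (eNbhd E ε)ᶜ,
      (inner ℝ (z - x) p : ℝ) ^ 2 ≤ inner ℝ (z - x) ξ ^ 2 := fun z hz =>
    hcone0 z (subset_closure hz.2) (by have := hz.1.1; rwa [mem_ball, dist_eq_norm] at this)
  have hVo : IsOpen (halfBall x ξ δ ∩ (eNbhd E ε)ᶜ) :=
    (isOpen_halfBall x ξ δ).inter isClosed_eNbhd.isOpen_compl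
  have hxV : x ∉ halfBall x ξ δ ∩ (eNbhd E ε)ᶜ := by
    rintro ⟨⟨-, h⟩, -⟩
    simp at h
  by_cases hR : Ioo 0 δ ⊆ (fun z => ‖z - x‖) '' (halfBall x ξ δ ∩ (eNbhd E ε)ᶜ)
  · exact hnc δ hδ (conn_case hE hε hF hηε hδ hloc hcone hR)
  rw [not_subset] at hR
  obtain ⟨ρ0, hρ0, hρR⟩ := hR
  -- a point of V with radius below `ρ0`
  obtain ⟨z1, hz1, hz1ρ⟩ : ∃ z1 ∈ halfBall x ξ δ ∩ (eNbhd E ε)ᶜ, ‖z1 - x‖ < ρ0 := by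
    obtain ⟨-, w, hw, hwx, hwn⟩ := hξ
    have l1 : Tendsto (fun n => (inner ℝ ((‖w n - x‖)⁻¹ • (w n - x)) ξ : ℝ)) atTop
        (𝓝 (inner ℝ ξ ξ)) := hwn.inner tendsto_const_nhds
    rw [hF.inner_self.1] at l1
    have l2 : Tendsto (fun n => ‖w n - x‖) atTop (𝓝 0) := by
      have := (hwx.sub_const x).norm
      simpa using this
    obtain ⟨n, h1, h2⟩ := ((l1.eventually (lt_mem_nhds zero_lt_one)).and
      (l2.eventually (gt_mem_nhds hρ0.1))).exists
    refine ⟨w n, ⟨⟨?_, ?_⟩, hw n⟩, h2⟩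
    · rw [mem_ball, dist_eq_norm]; exact h2.trans hρ0.2
    · rw [inner_smul_left] at h1
      exact pos_of_mul_pos_right h1 (by simp)
  obtain ⟨ρ, hρ1, hρ2, hρc, hρn⟩ := exists_closure_diff hz1ρ
    (isOpen_norm_image hVo hxV) ⟨z1, hz1, rfl⟩ hρR
  have hρpos : 0 < ρ := (norm_nonneg _).trans_lt hρ1
  have hρδ : ρ < δ := hρ2.trans_lt hρ0.2
  have hVc : IsCompact (closure (halfBall x ξ δ ∩ (eNbhd E ε)ᶜ)) := by
    apply Bornology.IsBounded.isCompact_closure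
    exact isBounded_ball.subset (fun z hz => hz.1.1)
  obtain ⟨u, hu, huρ⟩ : ∃ u ∈ closure (halfBall x ξ δ ∩ (eNbhd E ε)ᶜ), ‖u - x‖ = ρ := by
    have hc : IsCompact ((fun z => ‖z - x‖) '' closure (halfBall x ξ δ ∩ (eNbhd E ε)ᶜ)) :=
      hVc.image (by fun_prop)
    have := closure_minimal (image_mono subset_closure) hc.isClosed hρc
    exact this
  have hucl : u ∈ closure (eNbhd E ε)ᶜ := closure_mono inter_subset_right hu
  have ha0 : 0 ≤ (inner ℝ (u - x) ξ : ℝ) := by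
    have hc : IsClosed {z : Plane | 0 ≤ (inner ℝ (z - x) ξ : ℝ)} :=
      isClosed_le continuous_const (by fun_prop)
    exact closure_minimal (fun z hz => le_of_lt hz.1.2) hc hu
  have huδ : ‖u - x‖ < δ := huρ ▸ hρδ
  have hb := hcone0 u hucl huδ
  have ha : 0 < (inner ℝ (u - x) ξ : ℝ) := by
    refine lt_of_le_of_ne ha0 (fun h => ?_)
    have hn := hF.norm_sq (u - x)
    rw [huρ] at hn
    rw [← h] at hb hn
    have : 0 < ρ ^ 2 := by positivity
    linarith
  have hall : ∀ z, ‖z - x‖ = ‖u - x‖ → 0 < (inner ℝ (z - x) ξ : ℝ) → z ∈ eNbhd E ε := by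
    intro z hz hza
    by_contra hzn
    refine hρn ⟨z, ⟨⟨?_, hza⟩, hzn⟩, hz.trans huρ⟩
    rw [mem_ball, dist_eq_norm, hz]; exact huδ
  have hufr : u ∈ frontier (eNbhd E ε) := mem_frontier_iff.2 ⟨hall u rfl ha, hucl⟩
  obtain ⟨y', hy', hy'u, hy'B⟩ := limit_side hE hε hF hufr hηε hloc huδ ha hb hall
  obtain ⟨y, hy, hyu, hyT⟩ := limit_side hE hε hF.neg_right hufr hηε
    (fun z hz y hy hzy => by
      have := (hloc z hz y hy hzy).symm
      simpa [sub_eq_add_neg] using this) huδ ha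
    (by rw [inner_neg_right, neg_sq]; exact hb) hall
  have := hno u hufr ⟨by rw [mem_ball, dist_eq_norm]; exact huδ.trans_le hδη, ha⟩ y hy y' hy'
    hyu hy'u ((by simpa using hyT : ‖y - (x + ε • p)‖ ≤ η).trans hηη)
  linarith

lemma sing_of_two (hE : IsCompact E) (hε : 0 < ε) {u y y' : Plane}
    (hu : u ∈ frontier (eNbhd E ε)) (hy : y ∈ E) (hy' : y' ∈ E) (h1 : ‖y - u‖ = ε)
    (h2 : ‖y' - u‖ = ε) (hne : y ≠ y') : IsSingularity E ε u := by
  refine ⟨hu, ?_⟩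
  rintro ⟨⟨-, w, hw⟩, -⟩
  have m1 : y ∈ contributors E ε u := (mem_contrib hE hε hu).2 ⟨hy, h1⟩
  have m2 : y' ∈ contributors E ε u := (mem_contrib hE hε hu).2 ⟨hy', h2⟩
  rw [hw, mem_singleton_iff] at m1 m2
  exact hne (m1.trans m2.symm)

lemma antip_sing (hE : IsCompact E) (hε : 0 < ε) {x p : Plane}
    (hx : x ∈ frontier (eNbhd E ε)) (hp : Antip E ε x p) : IsSingularity E ε x := by
  obtain ⟨h0, h1, h2⟩ := hp
  refine sing_of_two hE hε hx h1 h2 (by simp [norm_smul, h0, abs_of_pos hε])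
    (by simp [norm_smul, h0, abs_of_pos hε]) ?_
  intro h
  have h3 : (2 * ε) • p = 0 := by
    have : (x + ε • p) - (x - ε • p) = 0 := sub_eq_zero.2 h
    rw [← this, two_mul, add_smul]; abel
  have := congrArg norm h3
  rw [norm_smul, h0, norm_zero, mul_one, Real.norm_eq_abs, abs_eq_zero] at this
  linarith

lemma chain_of_alt (hE : IsCompact E) (hε : 0 < ε) {x ξ p : Plane} (hp : ‖p‖ = 1)
    (h : ∀ η > 0, ∃ u ∈ frontier (eNbhd E ε), u ∈ halfBall x ξ η ∧ ∃ y ∈ E, ∃ y' ∈ E,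
      ‖y - u‖ = ε ∧ ‖y' - u‖ = ε ∧ ‖y - (x + ε • p)‖ ≤ η ∧ ‖y' - (x - ε • p)‖ ≤ η) :
    ∃ u, IsChainSeq E ε x u ∧ ∀ n, u n ∈ halfBall x ξ 1 := by
  obtain ⟨c, hc⟩ : ∃ c, c = min 1 (ε / 4) := ⟨_, rfl⟩
  have hc0 : 0 < c := by rw [hc]; positivity
  have hc1 : c ≤ 1 := hc ▸ min_le_left _ _
  have hc2 : c ≤ ε / 4 := hc ▸ min_le_right _ _
  have hle : ∀ n : ℕ, c / (n + 1 : ℝ) ≤ c := fun n =>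
    div_le_self hc0.le (by linarith [(Nat.cast_nonneg n : (0 : ℝ) ≤ n)])
  have hlim : Tendsto (fun n : ℕ => c / (n + 1 : ℝ)) atTop (𝓝 0) := by
    have := tendsto_one_div_add_atTop_nhds_zero_nat (𝕜 := ℝ)
    have := this.const_mul c
    simpa [div_eq_mul_inv] using this
  choose u hu huH y hy y' hy' hyu hy'u hyT hy'B using
    fun n : ℕ => h (c / (n + 1 : ℝ)) (by positivity)
  have hux0 : Tendsto (fun n => u n - x) atTop (𝓝 0) :=
    squeeze_zero_norm (fun n => by
      have := (huH n).1; rw [mem_ball, dist_eq_norm] at this; exact this.le) hlim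
  have hux : Tendsto u atTop (𝓝 x) := by
    have := hux0.add_const x; simpa using this
  have hyl : Tendsto y atTop (𝓝 (x + ε • p)) := by
    have := (squeeze_zero_norm hyT hlim).add_const (x + ε • p); simpa using this
  have hy'l : Tendsto y' atTop (𝓝 (x - ε • p)) := by
    have := (squeeze_zero_norm hy'B hlim).add_const (x - ε • p); simpa using this
  have hne : ∀ n, y n ≠ y' n := by
    intro n e
    have e1 : (2 * ε) • p = (y' n - (x - ε • p)) - (y n - (x + ε • p)) := by
      rw [e, two_mul, add_smul]; abel
    have e2 := norm_sub_le (y' n - (x - ε • p)) (y n - (x + ε • p))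
    rw [← e1, norm_smul, hp, mul_one, Real.norm_eq_abs, abs_of_pos (by positivity)] at e2
    linarith [hyT n, hy'B n, hle n]
  choose y1 y2 hext hn1 hn2 hmin using fun n => ext_structure hE hε (hu n)
  refine ⟨u, ⟨fun n => sing_of_two hE hε (hu n) (hy n) (hy' n) (hyu n) (hy'u n) (hne n),
    ?_, hux, y1, y2, hext, ?_⟩, ?_⟩
  · intro n e
    have := (huH n).2
    rw [e] at this
    simp at this
  · have l1 : Tendsto (fun n => ε⁻¹ * (ε⁻¹ * (inner ℝ (y n - u n) (y' n - u n) : ℝ))) atTop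
        (𝓝 (ε⁻¹ * (ε⁻¹ * (inner ℝ (x + ε • p - x) (x - ε • p - x) : ℝ)))) :=
      (((hyl.sub hux).inner (hy'l.sub hux)).const_mul _).const_mul _
    have e : ε⁻¹ * (ε⁻¹ * (inner ℝ (x + ε • p - x) (x - ε • p - x) : ℝ)) = -1 := by
      have e1 : x + ε • p - x = ε • p := by abel
      have e2 : x - ε • p - x = -(ε • p) := by abel
      rw [e1, e2, inner_neg_right, real_inner_self_eq_norm_sq, norm_smul, hp, mul_one,
        Real.norm_eq_abs, abs_of_pos hε]
      field_simp
    rw [e] at l1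
    have hi : ∀ n, (inner ℝ (ε⁻¹ • (y1 n - u n)) (ε⁻¹ • (y2 n - u n)) : ℝ) =
        ε⁻¹ * (ε⁻¹ * inner ℝ (y1 n - u n) (y2 n - u n)) := by
      intro n
      rw [inner_smul_left, inner_smul_right]; simp
    refine tendsto_of_tendsto_of_tendsto_of_le_of_le tendsto_const_nhds l1 ?_ ?_
    · intro n
      have h1 := abs_real_inner_le_norm (ε⁻¹ • (y1 n - u n)) (ε⁻¹ • (y2 n - u n))
      rw [norm_smul, norm_smul, hn1, hn2, norm_inv, Real.norm_eq_abs, abs_of_pos hε,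
        inv_mul_cancel₀ hε.ne', mul_one] at h1
      exact (abs_le.1 h1).1
    · intro n
      simp only [hi]
      have := hmin n (y n) (hy n) (y' n) (hy' n) (hyu n) (hy'u n)
      gcongr
  · intro n
    refine ⟨?_, (huH n).2⟩
    have := (huH n).1
    rw [mem_ball] at this ⊢
    linarith [hle n]

lemma IsChainSeq.subseq {x : Plane} {u : ℕ → Plane} (h : IsChainSeq E ε x u) {φ : ℕ → ℕ}
    (hφ : StrictMono φ) : IsChainSeq E ε x (u ∘ φ) := by
  obtain ⟨h1, h2, h3, y1, y2, h4, h5⟩ := h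
  exact ⟨fun n => h1 _, fun n => h2 _, h3.comp hφ.tendsto_atTop, y1 ∘ φ, y2 ∘ φ,
    fun n => h4 _, h5.comp hφ.tendsto_atTop⟩

/-- Both outward directions present, and a chain sequence on side `ξ`. -/
lemma two_sided (hE : IsCompact E) (hε : 0 < ε) {x ξ p : Plane} {u : ℕ → Plane}
    (hx : x ∈ frontier (eNbhd E ε)) (hF : Frame ξ p) (hA : Antip E ε x p)
    (hout : extOutward E ε x = {ξ, -ξ}) (hξ : ξ ∈ outwardDirs E ε x)
    (hξ' : -ξ ∈ outwardDirs E ε x) (hu : IsChainSeq E ε x u)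
    (hside : ∃ᶠ n in atTop, 0 < (inner ℝ (u n - x) ξ : ℝ)) :
    IsChainChain E ε x ∨ IsSharpChain E ε x := by
  have honly : ∀ y ∈ E, ‖y - x‖ = ε → y = x + ε • p ∨ y = x - ε • p := by
    intro y hy hyx
    have a1 := outward_le hE hε hξ hy hyx
    have a2 := outward_le hE hε hξ' hy hyx
    rw [inner_neg_right] at a2
    rcases hF.perp hε.le hyx (le_antisymm a1 (by linarith)) with h | h
    · left; rw [← h]; abel
    · right; rw [sub_eq_add_neg, ← h]; abel
  have hsing := antip_sing hE hε hx hA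
  have hball : ∀ᶠ n in atTop, u n ∈ ball x 1 :=
    hu.2.2.1.eventually_mem (ball_mem_nhds x one_pos)
  obtain ⟨φ, hφ, hφu⟩ := Filter.extraction_of_frequently_atTop (hside.and_eventually hball)
  have hch : ∃ δ > 0, ∃ u, IsChainSeq E ε x u ∧ ∀ n, u n ∈ halfBall x ξ δ :=
    ⟨1, one_pos, u ∘ φ, IsChainSeq.subseq hu hφ, fun n => ⟨(hφu n).2, (hφu n).1⟩⟩
  rcases dichotomy hE hε hx hF.neg_left hA honly hξ' with h | h
  · right
    refine ⟨hsing, -ξ, ?_, h, ?_⟩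
    · rw [neg_neg, hout, pair_comm]
    · rw [neg_neg]; exact hch
  · left
    refine ⟨hsing, ξ, hout, ?_⟩
    rintro η (rfl | rfl)
    · exact hch
    · obtain ⟨v, hv, hv'⟩ := chain_of_alt hE hε hA.1 h
      exact ⟨1, one_pos, v, hv, hv'⟩

lemma chain_type (hE : IsCompact E) (hε : 0 < ε) {x : Plane} {u : ℕ → Plane}
    (hu : IsChainSeq E ε x u) :
    IsChainSing E ε x ∨ IsChainChain E ε x ∨ IsSharpChain E ε x := by
  obtain ⟨hx, p, hA⟩ := chain_antip hE hε hu
  have hsing := antip_sing hE hε hx hA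
  obtain ⟨ξ, hξ⟩ := outward_nonempty hx
  have hF := antip_frame hE hε hA.1 hA.2.1 hA.2.2 hξ
  have heq := antip_extOutward hE hε hx hA.1 hA.2.1 hA.2.2
  have hsub : ∀ ζ ∈ outwardDirs E ε x, ζ = ξ ∨ ζ = -ξ := by
    intro ζ hζ
    have hF' := antip_frame hE hε hA.1 hA.2.1 hA.2.2 hζ
    have := hF.swap.perp zero_le_one hF'.1 hF'.swap.2.2
    simpa using this
  by_cases hξ' : -ξ ∈ outwardDirs E ε x
  · right
    have hout : extOutward E ε x = {ξ, -ξ} := by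
      rw [heq]
      ext ζ
      refine ⟨fun h => by simpa using hsub ζ h, ?_⟩
      rintro (rfl | rfl)
      · exact hξ
      · exact hξ'
    have hev : ∀ᶠ n in atTop, (inner ℝ (u n - x) ξ : ℝ) ≠ 0 := by
      filter_upwards [hu.2.2.1.eventually_mem (ball_mem_nhds x hε)] with n hn h0
      rw [mem_ball, dist_eq_norm] at hn
      have hb := cone hε hF (frontier_le hE hε (hu.1 n).1 hA.2.1)
        (frontier_le hE hε (hu.1 n).1 hA.2.2) hn
      have hN := hF.norm_sq (u n - x)
      rw [h0] at hb hN
      have hpos : 0 < ‖u n - x‖ := norm_pos_iff.2 (sub_ne_zero.2 (hu.2.1 n))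
      have : 0 < ‖u n - x‖ ^ 2 := by positivity
      linarith
    have hor : ∃ᶠ n in atTop, 0 < (inner ℝ (u n - x) ξ : ℝ) ∨
        0 < (inner ℝ (u n - x) (-ξ) : ℝ) := by
      apply Eventually.frequently
      filter_upwards [hev] with n hn
      rw [inner_neg_right]
      rcases lt_or_gt_of_ne hn with h | h
      · right; linarith
      · left; exact h
    rcases Filter.frequently_or_distrib.1 hor with h | h
    · exact two_sided hE hε hx hF hA hout hξ hξ' hu h
    · exact two_sided hE hε hx hF.neg_left hA (by rw [neg_neg, hout, pair_comm]) hξ'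
        (by rw [neg_neg]; exact hξ) hu h
  · left
    refine ⟨hsing, ⟨ξ, ?_⟩, u, hu⟩
    rw [heq]
    ext ζ
    refine ⟨fun h => ?_, ?_⟩
    · rcases hsub ζ h with h' | h'
      · exact h'
      · rw [h'] at h; exact absurd h hξ'
    · rintro rfl; exact hξ

lemma exists_chainSeq {x : Plane}
    (h : IsChainSing E ε x ∨ IsChainChain E ε x ∨ IsSharpChain E ε x) :
    ∃ u, IsChainSeq E ε x u := by
  rcases h with ⟨-, -, h⟩ | ⟨-, ξ, -, h⟩ | ⟨-, ξ, -, -, δ, -, u, h, -⟩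
  · exact h
  · obtain ⟨δ, -, u, h, -⟩ := h ξ (by simp)
    exact ⟨u, h⟩
  · exact ⟨u, h⟩

lemma main (hE : IsCompact E) (hε : 0 < ε) :
    IsClosed {x : Plane | IsChainSing E ε x ∨ IsChainChain E ε x ∨ IsSharpChain E ε x} ∧
    IsTotallyDisconnected
      {x : Plane | IsChainSing E ε x ∨ IsChainChain E ε x ∨ IsSharpChain E ε x} := by
  have hall : ∀ x, (IsChainSing E ε x ∨ IsChainChain E ε x ∨ IsSharpChain E ε x) →
      x ∈ frontier (eNbhd E ε) ∧ ∃ p, Antip E ε x p := by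
    intro x hx
    obtain ⟨u, hu⟩ := exists_chainSeq hx
    exact chain_antip hE hε hu
  constructor
  · apply IsSeqClosed.isClosed
    intro w x hw hwx
    by_cases hx : ∃ n, w n = x
    · obtain ⟨n, rfl⟩ := hx; exact hw n
    push Not at hx
    choose hfr p hp using fun n => hall (w n) (hw n)
    refine chain_type hE hε (u := w) ⟨fun n => antip_sing hE hε (hfr n) (hp n), hx, hwx,
      fun n => w n + ε • p n, fun n => w n - ε • p n,
      fun n => antip_extContrib hE hε (hfr n) (hp n).1 (hp n).2.1 (hp n).2.2, ?_⟩
    refine tendsto_const_nhds.congr (fun n => ?_)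
    have e1 : w n + ε • p n - w n = ε • p n := by abel
    have e2 : w n - ε • p n - w n = -(ε • p n) := by abel
    rw [e1, e2, smul_neg, inv_smul_smul₀ hε.ne', inner_neg_right, real_inner_self_eq_norm_sq,
      (hp n).1]
    norm_num
  · intro t ht htc
    exact antip_td hE hε htc (fun s hs => hall s (ht hs))
end ChainAux
/-- The set of chain singularities (types S6, S7 and S8) is closed and totally
disconnected. -/
theorem chain_singularities_closed_totally_disconnected (E : Set Plane)
    (hE : IsCompact E) {ε : ℝ} (hε : 0 < ε) :
    IsClosed {x : Plane | IsChainSing E ε x ∨ IsChainChain E ε x ∨ IsSharpChain E ε x} ∧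
    IsTotallyDisconnected
      {x : Plane | IsChainSing E ε x ∨ IsChainChain E ε x ∨ IsSharpChain E ε x} := by
  exact ChainAux.main hE hε

end
end
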